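/- arXiv:1703.04035 — 3 statements merged into one kernel-verified Lean document; each statement's English description precedes it below -/
import Mathlib

section
/- If G is a Laman graph (|E| = 2|V| - 3 and every subset of k >= 2 vertices spans at most 2k - 3 edges), then G is generically bearing rigid in R^d for every d >= 2: there exists a configuration p of distinct points in R^d such that the bearing Laplacian of (G, p) has rank dn - d - 1. -/
open Matrix

open scoped Classical in
/-- The orthogonal projection matrix `P(x) = I - x xᵀ / ‖x‖²`. -/
noncomputable def proj {d : ℕ} (x : Fin d → ℝ) : Matrix (Fin d) (Fin d) ℝ :=
  1 - (x ⬝ᵥ x)⁻¹ • Matrix.vecMulVec x x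

open scoped Classical in
/-- The bearing Laplacian of the network `(G, p)`: the `dn × dn` block matrix with
`[L]_{ij} = -P(g_{ij})` for edges `(i,j)`, `0` for non-adjacent `i ≠ j`, and
`[L]_{ii} = ∑_{j ∈ N_i} P(g_{ij})`.  Since `proj` is scale-invariant,
`proj (p j - p i) = P(g_{ij})` for the unit bearing `g_{ij}`. -/
noncomputable def bearingLaplacian {V : Type*} [Fintype V] {d : ℕ}
    (G : SimpleGraph V) (p : V → Fin d → ℝ) :
    Matrix (V × Fin d) (V × Fin d) ℝ :=
  fun q r =>
    if q.1 = r.1 then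
      (∑ k ∈ Finset.univ.filter (fun k => G.Adj q.1 k), proj (p k - p q.1)) q.2 r.2
    else if G.Adj q.1 r.1 then -(proj (p r.1 - p q.1) q.2 r.2) else 0

open scoped Classical in
/-- A graph on `n` vertices is Laman if it has exactly `2n - 3` edges and every
subset of `k ≥ 2` vertices spans at most `2k - 3` edges. -/
def IsLaman {n : ℕ} (G : SimpleGraph (Fin n)) : Prop :=
  G.edgeFinset.card = 2 * n - 3 ∧
  ∀ S : Finset (Fin n), 2 ≤ S.card →
    (G.edgeFinset.filter (fun e => ∀ v ∈ e, v ∈ S)).card ≤ 2 * S.card - 3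


theorem rado_aux {ι W : Type*} [Fintype ι] [DecidableEq ι] [AddCommGroup W] [Module ℝ W]
    [FiniteDimensional ℝ W] (A : ι → Submodule ℝ W) (e : ι) (x y : W)
    (hA : A e ≤ Submodule.span ℝ {x} ⊔ Submodule.span ℝ {y})
    (h : ∀ F : Finset ι, F.card ≤ Module.finrank ℝ (F.sup A : Submodule ℝ W)) :
    (∀ F : Finset ι, F.card ≤ Module.finrank ℝ
      (F.sup (Function.update A e (Submodule.span ℝ {x})) : Submodule ℝ W)) ∨
    (∀ F : Finset ι, F.card ≤ Module.finrank ℝ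
      (F.sup (Function.update A e (Submodule.span ℝ {y})) : Submodule ℝ W)) := by
  by_contra hcon
  push Not at hcon
  obtain ⟨⟨F1, h1⟩, ⟨F2, h2⟩⟩ := hcon
  have key : ∀ (F : Finset ι) (B : Submodule ℝ W), 
      Module.finrank ℝ (F.sup (Function.update A e B) : Submodule ℝ W) < F.card → e ∈ F := by
    intro F B hF
    by_contra he
    have : F.sup (Function.update A e B) = F.sup A := by
      apply Finset.sup_congr rfl
      intro a ha
      rw [Function.update_of_ne]
      rintro rfl; exact he ha
    rw [this] at hF
    exact absurd (h F) (by omega)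
  have e1 := key _ _ h1
  have e2 := key _ _ h2
  set B1 := F1.sup (Function.update A e (Submodule.span ℝ {x})) with hB1
  set B2 := F2.sup (Function.update A e (Submodule.span ℝ {y})) with hB2
  have hs := Submodule.finrank_sup_add_finrank_inf_eq B1 B2
  have hle1 : ∀ a ∈ F1, a ≠ e → A a ≤ B1 := by
    intro a ha hae
    have := Finset.le_sup (f := Function.update A e (Submodule.span ℝ {x})) ha
    rwa [Function.update_of_ne hae] at this
  have hle2 : ∀ a ∈ F2, a ≠ e → A a ≤ B2 := by
    intro a ha hae
    have := Finset.le_sup (f := Function.update A e (Submodule.span ℝ {y})) ha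
    rwa [Function.update_of_ne hae] at this
  have hx : Submodule.span ℝ {x} ≤ B1 := by
    have := Finset.le_sup (f := Function.update A e (Submodule.span ℝ {x})) e1
    rwa [Function.update_self] at this
  have hy : Submodule.span ℝ {y} ≤ B2 := by
    have := Finset.le_sup (f := Function.update A e (Submodule.span ℝ {y})) e2
    rwa [Function.update_self] at this
  have hU : (F1 ∪ F2).sup A ≤ B1 ⊔ B2 := by
    apply Finset.sup_le
    intro a ha
    by_cases hae : a = e
    · subst hae
      exact hA.trans (sup_le_sup hx hy)
    · rcases Finset.mem_union.1 ha with ha | ha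
      · exact (hle1 a ha hae).trans le_sup_left
      · exact (hle2 a ha hae).trans le_sup_right
  have hI : ((F1 ∩ F2).erase e).sup A ≤ B1 ⊓ B2 := by
    apply Finset.sup_le
    intro a ha
    rw [Finset.mem_erase, Finset.mem_inter] at ha
    exact le_inf (hle1 a ha.2.1 ha.1) (hle2 a ha.2.2 ha.1)
  have c1 := (h _).trans (Submodule.finrank_mono hU)
  have c2 := (h _).trans (Submodule.finrank_mono hI)
  rw [Finset.card_erase_of_mem (Finset.mem_inter.2 ⟨e1, e2⟩)] at c2
  have := Finset.card_union_add_card_inter F1 F2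
  omega

theorem rado {ι W : Type*} [Fintype ι] [DecidableEq ι] [AddCommGroup W] [Module ℝ W]
    [FiniteDimensional ℝ W] (φ : ι → Fin 2 → W)
    (h : ∀ F : Finset ι, F.card ≤ Module.finrank ℝ
      (F.sup (fun e => Submodule.span ℝ (Set.range (φ e))) : Submodule ℝ W)) :
    ∃ c : ι → Fin 2, LinearIndependent ℝ (fun e => φ e (c e)) := by
  have main : ∀ S : Finset ι, ∃ c : ι → Fin 2, ∀ F : Finset ι, F.card ≤ Module.finrank ℝ
      (F.sup (fun e => if e ∈ S then Submodule.span ℝ {φ e (c e)} else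
        Submodule.span ℝ (Set.range (φ e))) : Submodule ℝ W) := by
    intro S
    induction S using Finset.induction_on with
    | empty => exact ⟨fun _ => 0, fun F => (h F).trans (Submodule.finrank_mono
        (Finset.sup_mono_fun (fun e _ => by rw [if_neg (Finset.notMem_empty e)])))⟩
    | insert a S ha ih =>
      obtain ⟨c, hc⟩ := ih
      have hh := rado_aux _ a (φ a 0) (φ a 1) (by
        rw [if_neg ha, ← Submodule.span_union]
        apply Submodule.span_mono
        rintro _ ⟨k, rfl⟩
        fin_cases k <;> simp) hc
      have fin : ∀ k : Fin 2, (Function.update (fun e => if e ∈ S then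
          Submodule.span ℝ {φ e (c e)} else
        Submodule.span ℝ (Set.range (φ e))) a (Submodule.span ℝ {φ a k})) =
          (fun e => if e ∈ insert a S then Submodule.span ℝ {φ e (Function.update c a k e)} else
        Submodule.span ℝ (Set.range (φ e))) := by
        intro k
        ext1 e
        by_cases hea : e = a
        · subst hea; simp
        · simp [hea]
      rcases hh with hh | hh
      · exact ⟨Function.update c a 0, by rw [fin] at hh; exact hh⟩
      · exact ⟨Function.update c a 1, by rw [fin] at hh; exact hh⟩
  obtain ⟨c, hc⟩ := main Finset.univ
  refine ⟨c, ?_⟩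
  rw [linearIndependent_iff_card_le_finrank_span]
  have := hc Finset.univ
  rw [Finset.card_univ] at this
  refine this.trans (Submodule.finrank_mono ?_)
  apply Finset.sup_le
  intro a _
  rw [if_pos (Finset.mem_univ a)]
  apply Submodule.span_mono
  simp

/-- the difference functional -/
noncomputable def dfun {V : Type*} (u v : V) (k : Fin 2) : Module.Dual ℝ (V × Fin 2 → ℝ) :=
  (LinearMap.proj (u, k) : (V × Fin 2 → ℝ) →ₗ[ℝ] ℝ) - LinearMap.proj (v, k)

theorem dfun_apply {V : Type*} (u v : V) (k : Fin 2) (q : V × Fin 2 → ℝ) :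
  dfun u v k q = q (u,k) - q (v,k) := rfl

open scoped Classical in
theorem count {V ι : Type*} [Fintype V] [Fintype ι] (s t : ι → V)
    (hsp : ∀ S : Finset V, S.Nonempty →
      (Finset.univ.filter (fun e => s e ∈ S ∧ t e ∈ S)).card + 2 ≤ 2 * S.card)
    (F : Finset ι) : F.card ≤ Module.finrank ℝ
      (F.sup (fun e => Submodule.span ℝ (Set.range (dfun (s e) (t e)))) :
        Submodule ℝ (Module.Dual ℝ (V × Fin 2 → ℝ))) := by
  set U := (F.sup (fun e => Submodule.span ℝ (Set.range (dfun (s e) (t e)))) :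
        Submodule ℝ (Module.Dual ℝ (V × Fin 2 → ℝ))) with hU
  let r : Setoid V := Relation.EqvGen.setoid (fun u v => ∃ e ∈ F, s e = u ∧ t e = v)
  have hr : ∀ e ∈ F, (Quotient.mk r (s e)) = Quotient.mk r (t e) := fun e he =>
    Quotient.sound (Relation.EqvGen.rel _ _ ⟨e, he, rfl, rfl⟩)
  have hD := Subspace.finrank_add_finrank_dualCoannihilator_eq U
  have hq : ∀ q ∈ U.dualCoannihilator, ∀ e ∈ F, ∀ k, q (s e, k) = q (t e, k) := by
    intro q hq e he k
    rw [Submodule.mem_dualCoannihilator] at hq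
    have := hq (dfun (s e) (t e) k) (by
      have h1 : Submodule.span ℝ (Set.range (dfun (s e) (t e))) ≤ U :=
        Finset.le_sup (f := (fun e => Submodule.span ℝ (Set.range (dfun (s e) (t e))))) he
      exact h1 (Submodule.subset_span ⟨k, rfl⟩))
    rw [dfun_apply] at this
    linarith
  have hq2 : ∀ q ∈ U.dualCoannihilator, ∀ u v, r u v → ∀ k, q (u, k) = q (v, k) := by
    intro q hqq u v huv k
    change Relation.EqvGen _ u v at huv
    induction huv with
    | rel u v h => obtain ⟨e, he, rfl, rfl⟩ := h; exact hq q hqq e he k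
    | refl => rfl
    | symm _ _ _ ih => exact ih.symm
    | trans _ _ _ _ _ ih1 ih2 => exact ih1.trans ih2
  let f : (V × Fin 2 → ℝ) →ₗ[ℝ] (Quotient r × Fin 2 → ℝ) :=
    LinearMap.funLeft ℝ ℝ (fun c => (c.1.out, c.2))
  have hinj : Function.Injective (f ∘ₗ U.dualCoannihilator.subtype) := by
    rw [← LinearMap.ker_eq_bot, LinearMap.ker_eq_bot']
    rintro ⟨q, hqq⟩ h0
    ext ⟨v, k⟩
    have := congrFun h0 (Quotient.mk r v, k)
    have h2 := hq2 q hqq _ _ (Quotient.mk_out (s := r) v) k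
    simp [f, LinearMap.funLeft_apply] at this
    simp [← h2, this]
  have hfr := LinearMap.finrank_le_finrank_of_injective hinj
  simp only [Module.finrank_fintype_fun_eq_card, Fintype.card_prod, Fintype.card_fin] at hfr hD
  have hsum : F.card + 2 * Fintype.card (Quotient r) ≤ 2 * Fintype.card V := by
    have e1 : F.card = ∑ C : Quotient r, (F.filter (fun e => Quotient.mk r (s e) = C)).card :=
      Finset.card_eq_sum_card_fiberwise (fun _ _ => Finset.mem_univ _)
    have e2 : Fintype.card V = ∑ C : Quotient r,
        ((Finset.univ : Finset V).filter (fun v => Quotient.mk r v = C)).card :=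
      Finset.card_eq_sum_card_fiberwise (fun _ _ => Finset.mem_univ _)
    have e3 : 2 * Fintype.card (Quotient r) = ∑ C : Quotient r, 2 := by
      simp [mul_comm]
    rw [e1, e2, e3, Finset.mul_sum, ← Finset.sum_add_distrib]
    apply Finset.sum_le_sum
    intro C _
    refine le_trans ?_ (hsp (Finset.univ.filter (fun v => Quotient.mk r v = C))
      ⟨C.out, by simp⟩)
    gcongr
    intro e he
    simp only [Finset.mem_filter, Finset.mem_univ, true_and] at he ⊢
    exact ⟨he.2, (hr e he.1) ▸ he.2⟩
  omega

open scoped Classical in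
theorem special {V ι : Type*} [Fintype V] [Fintype ι] (s t : ι → V) (hne : ∀ e, s e ≠ t e)
    (hcard : Fintype.card ι + 3 = 2 * Fintype.card V)
    (hsp : ∀ S : Finset V, 2 ≤ S.card →
      (Finset.univ.filter (fun e => s e ∈ S ∧ t e ∈ S)).card + 3 ≤ 2 * S.card)
    (i j : V) (hij : i ≠ j) :
    ∃ a : ι × Fin 2 → ℝ, ∀ q : V × Fin 2 → ℝ,
      (∀ e, ∑ k, a (e, k) * (q (s e, k) - q (t e, k)) = 0) →
      (∀ k, q (i, k) = 0) → (∀ k, q (j, k) = 0) → q = 0 := by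
  let s' : Option ι → V := fun o => o.elim i s
  let t' : Option ι → V := fun o => o.elim j t
  obtain ⟨c, hc⟩ := rado (fun o : Option ι => dfun (s' o) (t' o)) (count s' t' (by
    intro S hS
    have hS1 := hS.card_pos
    by_cases h2 : 2 ≤ S.card
    · have := hsp S h2
      have h3 : (Finset.univ.filter (fun e => s' e ∈ S ∧ t' e ∈ S)) ⊆
        insert none ((Finset.univ.filter (fun e => s e ∈ S ∧ t e ∈ S)).image some) := by
        intro o ho
        cases o with
        | none => simp
        | some e => simpa [s', t'] using ho
      have h4 := (Finset.card_le_card h3).trans (Finset.card_insert_le _ _)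
      have h5 := Finset.card_image_le (s := (Finset.univ.filter (fun e => s e ∈ S ∧ t e ∈ S)))
        (f := some)
      omega
    · have h1 : S.card = 1 := by omega
      obtain ⟨v, rfl⟩ := Finset.card_eq_one.1 h1
      have : (Finset.univ.filter (fun e => s' e ∈ ({v} : Finset V) ∧ t' e ∈ ({v} : Finset V))) = ∅ := by
        rw [Finset.filter_eq_empty_iff]
        rintro (_ | e) _ ⟨h1, h2⟩
        · simp [s', t'] at h1 h2; exact hij (h1.trans h2.symm)
        · simp [s', t'] at h1 h2; exact hne e (h1.trans h2.symm)
      rw [this]; simp))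
  set U := Submodule.span ℝ (Set.range (fun o : Option ι => dfun (s' o) (t' o) (c o))) with hU
  have hfU : Module.finrank ℝ U = Fintype.card (Option ι) := finrank_span_eq_card hc
  have hD := Subspace.finrank_add_finrank_dualCoannihilator_eq U
  have hmem : ∀ q : V × Fin 2 → ℝ, (∀ o, q (s' o, c o) = q (t' o, c o)) →
      q ∈ U.dualCoannihilator := by
    intro q hq
    rw [Submodule.mem_dualCoannihilator]
    intro φ hφ
    induction hφ using Submodule.span_induction with
    | mem x h => obtain ⟨o, rfl⟩ := h; simp [dfun_apply, hq o]
    | zero => simp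
    | add x y _ _ h1 h2 => simp [h1, h2]
    | smul a x _ h => simp [h]
  simp only [Module.finrank_fintype_fun_eq_card, Fintype.card_prod, Fintype.card_fin,
    Fintype.card_option] at hD hfU
  -- constants
  let κ : (Fin 2 → ℝ) →ₗ[ℝ] (V × Fin 2 → ℝ) := LinearMap.funLeft ℝ ℝ Prod.snd
  have hκi : Function.Injective κ := by
    intro x y hxy
    ext k
    exact congrFun hxy (i, k)
  have hκr : LinearMap.range κ ≤ U.dualCoannihilator := by
    rintro _ ⟨x, rfl⟩
    exact hmem _ (fun o => rfl)
  have hκf := LinearMap.finrank_range_of_inj hκi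
  have heq : LinearMap.range κ = U.dualCoannihilator := by
    apply Submodule.eq_of_le_of_finrank_eq hκr
    rw [hκf, Module.finrank_fintype_fun_eq_card, Fintype.card_fin]; omega
  refine ⟨fun p => if p.2 = c (some p.1) then 1 else 0, fun q hq hqi hqj => ?_⟩
  have : q ∈ LinearMap.range κ := by
    rw [heq]
    apply hmem
    rintro (_ | e)
    · simp [s', t', hqi, hqj]
    · have := hq e
      simp at this
      simp [s', t']; linarith
  obtain ⟨x, rfl⟩ := this
  ext ⟨v, k⟩
  exact hqi k

open scoped Classical in
/-- the constraint matrix -/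
noncomputable def cmat {R V ι : Type*} [CommRing R] (s t : ι → V) (i j : V) (a : ι × Fin 2 → R) :
    Matrix (ι ⊕ (Fin 2 ⊕ Fin 2)) (V × Fin 2) R :=
  fun r c => match r with
  | .inl e => a (e, c.2) * ((if s e = c.1 then 1 else 0) - (if t e = c.1 then 1 else 0))
  | .inr (.inl k) => if (i, k) = c then 1 else 0
  | .inr (.inr k) => if (j, k) = c then 1 else 0

open scoped Classical in
/-- Gram determinant -/
noncomputable def gdet {R V ι : Type*} [Fintype V] [Fintype ι] [CommRing R] (s t : ι → V) (i j : V)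
    (a : ι × Fin 2 → R) : R :=
  Matrix.det (Matrix.transpose (cmat s t i j a) * (cmat s t i j a) : Matrix (V × Fin 2) (V × Fin 2) R)

theorem cmat_inl {V ι : Type*} [Fintype V] (s t : ι → V) (i j : V)
    (a : ι × Fin 2 → ℝ) (q : V × Fin 2 → ℝ) (e : ι) :
    (cmat s t i j a *ᵥ q) (.inl e) = ∑ k, a (e, k) * (q (s e, k) - q (t e, k)) := by
  classical
  simp only [mulVec, dotProduct, cmat]
  rw [Fintype.sum_prod_type_right]
  apply Finset.sum_congr rfl
  intro k _
  simp [mul_assoc, ← Finset.mul_sum, sub_mul, Finset.sum_sub_distrib]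

theorem cmat_ker {V ι : Type*} [Fintype V] [Fintype ι] (s t : ι → V) (i j : V)
    (a : ι × Fin 2 → ℝ) (q : V × Fin 2 → ℝ) : cmat s t i j a *ᵥ q = 0 ↔
      (∀ e, ∑ k, a (e, k) * (q (s e, k) - q (t e, k)) = 0) ∧
      (∀ k, q (i, k) = 0) ∧ (∀ k, q (j, k) = 0) := by
  classical
  have h1 : ∀ k, (cmat s t i j a *ᵥ q) (.inr (.inl k)) = q (i, k) := by
    intro k; simp [mulVec, dotProduct, cmat]
  have h2 : ∀ k, (cmat s t i j a *ᵥ q) (.inr (.inr k)) = q (j, k) := by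
    intro k; simp [mulVec, dotProduct, cmat]
  constructor
  · intro h
    refine ⟨fun e => ?_, fun k => ?_, fun k => ?_⟩
    · rw [← cmat_inl s t i j, h]; rfl
    · rw [← h1, h]; rfl
    · rw [← h2, h]; rfl
  · rintro ⟨ha, hb, hc⟩
    ext r
    rcases r with e | k | k
    · rw [cmat_inl, ha]; rfl
    · rw [h1, hb]; rfl
    · rw [h2, hc]; rfl

open scoped Classical in
theorem cmat_det {V ι : Type*} [Fintype V] [Fintype ι] (s t : ι → V) (i j : V)
    (a : ι × Fin 2 → ℝ) : gdet s t i j a ≠ 0 ↔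
      ∀ q : V × Fin 2 → ℝ,
      (∀ e, ∑ k, a (e, k) * (q (s e, k) - q (t e, k)) = 0) →
      (∀ k, q (i, k) = 0) → (∀ k, q (j, k) = 0) → q = 0 := by
  have hk : ∀ q, ((cmat s t i j a)ᵀ * cmat s t i j a) *ᵥ q = 0 ↔ cmat s t i j a *ᵥ q = 0 := by
    intro q
    have := Matrix.ker_mulVecLin_transpose_mul_self (cmat s t i j a)
    have h2 := SetLike.ext_iff.1 this q
    rwa [LinearMap.mem_ker, LinearMap.mem_ker, Matrix.mulVecLin_apply, Matrix.mulVecLin_apply] at h2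
  rw [gdet, ne_eq, ← Matrix.exists_mulVec_eq_zero_iff]
  push Not
  constructor
  · intro h q h1 h2 h3
    by_contra hq
    exact h q hq ((hk q).2 ((cmat_ker _ _ _ _ _ _).2 ⟨h1, h2, h3⟩))
  · intro h q hq h0
    obtain ⟨h1, h2, h3⟩ := (cmat_ker _ _ _ _ _ _).1 ((hk q).1 h0)
    exact hq (h q h1 h2 h3)

open scoped Classical in
theorem cmat_eval {V ι : Type*} [Fintype V] [Fintype ι] (s t : ι → V) (i j : V)
    (a : ι × Fin 2 → ℝ) : MvPolynomial.eval a
      (gdet s t i j (MvPolynomial.X (R := ℝ))) =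
      gdet s t i j a := by
  rw [gdet, gdet, RingHom.map_det]
  congr 1
  have : (cmat s t i j (MvPolynomial.X (R := ℝ))).map (MvPolynomial.eval a) = cmat s t i j a := by
    ext r c
    rcases r with e | k | k
    · simp only [cmat, Matrix.map_apply]
      split_ifs <;> simp
    · simp only [cmat, Matrix.map_apply]
      split_ifs <;> simp
    · simp only [cmat, Matrix.map_apply]
      split_ifs <;> simp
  rw [RingHom.mapMatrix_apply, Matrix.map_mul, Matrix.transpose_map, this]

open scoped Classical in
theorem generic {V ι : Type*} [Fintype V] [Fintype ι] (s t : ι → V) (hne : ∀ e, s e ≠ t e)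
    (hcard : Fintype.card ι + 3 = 2 * Fintype.card V)
    (hsp : ∀ S : Finset V, 2 ≤ S.card →
      (Finset.univ.filter (fun e => s e ∈ S ∧ t e ∈ S)).card + 3 ≤ 2 * S.card) (e0 : ι) :
    ∃ a : ι × Fin 2 → ℝ, a (e0, 0) ≠ 0 ∧ ∀ i j : V, i ≠ j → ∀ q : V × Fin 2 → ℝ,
      (∀ e, ∑ k, a (e, k) * (q (s e, k) - q (t e, k)) = 0) →
      (∀ k, q (i, k) = 0) → (∀ k, q (j, k) = 0) → q = 0 := by
  let D : V × V → MvPolynomial (ι × Fin 2) ℝ := fun p =>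
    gdet s t p.1 p.2 (MvPolynomial.X (R := ℝ))
  let P : MvPolynomial (ι × Fin 2) ℝ := MvPolynomial.X (e0, 0) *
    ∏ p ∈ Finset.univ.filter (fun p : V × V => p.1 ≠ p.2), D p
  have hP : P ≠ 0 := by
    apply mul_ne_zero (MvPolynomial.X_ne_zero _)
    rw [Finset.prod_ne_zero_iff]
    rintro ⟨i, j⟩ hp h0
    obtain ⟨a, ha⟩ := special s t hne hcard hsp i j (by simpa using hp)
    have h1 := (cmat_det s t i j a).2 ha
    rw [← cmat_eval] at h1
    apply h1
    change MvPolynomial.eval a (D (i, j)) = 0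
    rw [h0, map_zero]
  obtain ⟨a, ha⟩ : ∃ a, MvPolynomial.eval a P ≠ 0 := by
    by_contra hcon
    push Not at hcon
    exact hP (MvPolynomial.funext (fun a => by rw [hcon, map_zero]))
  rw [map_mul, MvPolynomial.eval_X, map_prod] at ha
  have h2 := right_ne_zero_of_mul ha
  rw [Finset.prod_ne_zero_iff] at h2
  refine ⟨a, left_ne_zero_of_mul ha, fun i j hij => ?_⟩
  rw [← cmat_det, ← cmat_eval]
  exact h2 (i, j) (by simpa using hij)

/-- planar result: injective placement with only trivial parallel drawings -/
theorem planar {V ι : Type*} [Fintype V] [Fintype ι] [DecidableEq V] (s t : ι → V)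
    (hne : ∀ e, s e ≠ t e)
    (hcard : Fintype.card ι + 3 = 2 * Fintype.card V)
    (hsp : ∀ S : Finset V, 2 ≤ S.card →
      (Finset.univ.filter (fun e => s e ∈ S ∧ t e ∈ S)).card + 3 ≤ 2 * S.card) (e0 : ι) :
    ∃ P : V × Fin 2 → ℝ, (∀ i j, (∀ k, P (i, k) = P (j, k)) → i = j) ∧
      (∀ q : V × Fin 2 → ℝ, (∀ e, ∃ c : ℝ, ∀ k, q (s e, k) - q (t e, k) =
        c * (P (s e, k) - P (t e, k))) → ∃ c : ℝ, ∃ w : Fin 2 → ℝ, ∀ v k,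
          q (v, k) = w k + c * P (v, k)) ∧
      (∀ f : V → ℝ, (∀ e, f (s e) = f (t e)) → ∀ u v, f u = f v) := by
  classical
  obtain ⟨a, ha0, ha⟩ := generic s t hne hcard (by convert hsp) e0
  have hconst : ∀ q : V × Fin 2 → ℝ,
      (∀ e, ∑ k, a (e, k) * (q (s e, k) - q (t e, k)) = 0) → ∀ i j, i ≠ j →
      (∀ k, q (i, k) = q (j, k)) → ∀ v k, q (v, k) = q (i, k) := by
    intro q hq i j hij hqij v k
    have := ha i j hij (fun p => q p - q (i, p.2)) (by simpa using hq) (by simp)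
      (by simp [hqij])
    have h2 := congrFun this (v, k)
    simp at h2; linarith
  let Φ : (V × Fin 2 → ℝ) →ₗ[ℝ] (ι ⊕ Fin 2 → ℝ) :=
    { toFun := fun q r => Sum.elim (fun e => ∑ k, a (e, k) * (q (s e, k) - q (t e, k)))
        (fun k => q (s e0, k)) r
      map_add' := by
        intro x y; ext r; rcases r with e | k
        · simp; ring
        · simp
      map_smul' := by
        intro c x; ext r; rcases r with e | k
        · simp; ring
        · simp }
  have hker : LinearMap.ker Φ ≠ ⊥ := by
    apply LinearMap.ker_ne_bot_of_finrank_lt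
    simp; omega
  obtain ⟨P, hPk, hP0⟩ := Submodule.exists_mem_ne_zero_of_ne_bot hker
  rw [LinearMap.mem_ker] at hPk
  have hP : ∀ e, ∑ k, a (e, k) * (P (s e, k) - P (t e, k)) = 0 := fun e =>
    congrFun hPk (.inl e)
  have hPs : ∀ k, P (s e0, k) = 0 := fun k => congrFun hPk (.inr k)
  have hinj : ∀ i j, (∀ k, P (i, k) = P (j, k)) → i = j := by
    intro i j h
    by_contra hij
    have h1 := hconst P hP i j hij h
    apply hP0
    ext ⟨v, k⟩
    rw [h1, ← h1 (s e0), hPs]; rfl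
  refine ⟨P, hinj, ?_, ?_⟩
  · intro q hq
    have hqK : ∀ e, ∑ k, a (e, k) * (q (s e, k) - q (t e, k)) = 0 := by
      intro e
      obtain ⟨c, hc⟩ := hq e
      have := hP e
      simp only [hc]
      simp only [Fin.sum_univ_two] at this ⊢
      linear_combination c * this
    obtain ⟨c, hc⟩ := hq e0
    have h1 := hconst (fun p => q p - c * P p) (by
      intro e
      have h1 := hP e
      have h2 := hqK e
      simp only [Fin.sum_univ_two] at h1 h2 ⊢
      linear_combination h2 - c * h1) _ _ (hne e0) (by
        intro k; have := hc k; linarith)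
    refine ⟨c, fun k => q (s e0, k) - c * P (s e0, k), fun v k => ?_⟩
    have := h1 v k
    linarith
  · intro f hf u v
    have h1 := hconst (fun p => f p.1) (by intro e; simp [hf]) _ _ (hne e0)
      (by intro k; simp [hf])
    exact (h1 u 0).trans (h1 v 0).symm

theorem proj_mulVec {d : ℕ} (g z : Fin d → ℝ) :
    proj g *ᵥ z = z - ((g ⬝ᵥ g)⁻¹ * (g ⬝ᵥ z)) • g := by
  rw [proj, Matrix.sub_mulVec, Matrix.one_mulVec, Matrix.smul_mulVec, Matrix.vecMulVec_mulVec]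
  simp [mul_smul]

theorem proj_neg' {d : ℕ} (g : Fin d → ℝ) : proj (-g) = proj g := by
  simp [proj, Matrix.vecMulVec_neg, Matrix.neg_vecMulVec]

theorem proj_quad {d : ℕ} (g z : Fin d → ℝ) (hg : g ≠ 0) :
    z ⬝ᵥ (proj g *ᵥ z) = (z - ((g ⬝ᵥ g)⁻¹ * (g ⬝ᵥ z)) • g) ⬝ᵥ
      (z - ((g ⬝ᵥ g)⁻¹ * (g ⬝ᵥ z)) • g) := by
  have h : g ⬝ᵥ g ≠ 0 := by rwa [ne_eq, dotProduct_self_eq_zero]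
  rw [proj_mulVec]
  simp only [sub_dotProduct, dotProduct_sub, smul_dotProduct, dotProduct_smul, smul_eq_mul,
    dotProduct_comm z g]
  field_simp
  ring

open scoped Classical in
theorem lap_mulVec {V : Type*} [Fintype V] {d : ℕ} (G : SimpleGraph V) (p : V → Fin d → ℝ)
    (x : V × Fin d → ℝ) (u : V) (k : Fin d) :
    (bearingLaplacian G p *ᵥ x) (u, k) =
      ∑ v, if G.Adj u v then (proj (p v - p u) *ᵥ (fun l => x (u, l) - x (v, l))) k else 0 := by
  simp only [mulVec, dotProduct, bearingLaplacian]
  rw [Fintype.sum_prod_type]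
  have h1 : ∀ v, (∑ l, (if u = v then
      (∑ k ∈ Finset.univ.filter (fun k => G.Adj u k), proj (p k - p u)) k l
    else if G.Adj u v then -(proj (p v - p u) k l) else 0) * x (v, l)) =
      (if u = v then ∑ l, (∑ k ∈ Finset.univ.filter (fun k => G.Adj u k), proj (p k - p u)) k l * x (u, l) else 0)
      + (if G.Adj u v then -∑ l, proj (p v - p u) k l * x (v, l) else 0) := by
    intro v
    by_cases h : u = v
    · subst h; simp
    · by_cases h2 : G.Adj u v <;> simp [h, h2]
  simp only [] at h1 ⊢
  rw [Finset.sum_congr rfl (fun v _ => h1 v), Finset.sum_add_distrib]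
  simp only [Finset.sum_ite_eq, Finset.mem_univ, if_true]
  have h2 : ∑ l, (∑ k ∈ Finset.univ.filter (fun k => G.Adj u k), proj (p k - p u)) k l * x (u, l)
      = ∑ v, if G.Adj u v then ∑ l, proj (p v - p u) k l * x (u, l) else 0 := by
    rw [← Finset.sum_filter, Finset.sum_comm]
    apply Finset.sum_congr rfl
    intro l _
    rw [Matrix.sum_apply, Finset.sum_mul]
  rw [h2, ← Finset.sum_add_distrib]
  apply Finset.sum_congr rfl
  intro v _
  split_ifs
  · simp [mul_sub]; ring
  · simp

theorem lap_ker {V : Type*} [Fintype V] {d : ℕ} (G : SimpleGraph V) (p : V → Fin d → ℝ)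
    (hp : Function.Injective p) (x : V × Fin d → ℝ) :
    bearingLaplacian G p *ᵥ x = 0 ↔ ∀ u v, G.Adj u v → ∃ c : ℝ, ∀ k,
      x (u, k) - x (v, k) = c * (p u k - p v k) := by
  classical
  constructor
  · intro h
    let T : V → V → ℝ := fun u v => if G.Adj u v then (fun l => x (u, l) - x (v, l)) ⬝ᵥ
      (proj (p v - p u) *ᵥ (fun l => x (u, l) - x (v, l))) else 0
    let S : V → V → ℝ := fun u v => if G.Adj u v then (fun l => x (u, l)) ⬝ᵥ
      (proj (p v - p u) *ᵥ (fun l => x (u, l) - x (v, l))) else 0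
    have hST : ∀ u v, T u v = S u v + S v u := by
      intro u v
      simp only [T, S, G.adj_comm v u]
      split_ifs
      · have e1 : p u - p v = -(p v - p u) := by simp
        have e2 : (fun l => x (v, l) - x (u, l)) = -(fun l => x (u, l) - x (v, l)) := by
          ext; simp
        have e3 : (fun l => x (u, l) - x (v, l)) = (fun l => x (u, l)) - (fun l => x (v, l)) := rfl
        rw [e1, proj_neg', e2, Matrix.mulVec_neg, dotProduct_neg, ← sub_eq_add_neg,
          ← sub_dotProduct, ← e3]
      · simp
    have hS : ∀ u, ∑ v, S u v = 0 := by
      intro u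
      have : ∑ k, x (u, k) * (bearingLaplacian G p *ᵥ x) (u, k) = 0 := by simp [h]
      rw [← this]
      simp only [lap_mulVec, Finset.mul_sum]
      rw [Finset.sum_comm]
      apply Finset.sum_congr rfl
      intro v _
      simp only [S]
      split_ifs
      · rfl
      · simp
    have hT : ∑ u, ∑ v, T u v = 0 := by
      simp only [hST, Finset.sum_add_distrib]
      rw [Finset.sum_comm (f := fun u v => S v u)]
      simp [hS]
    have hT0 : ∀ u v, 0 ≤ T u v := by
      intro u v
      simp only [T]
      split_ifs with hadj
      · rw [proj_quad _ _ (sub_ne_zero.2 (fun h => hadj.ne (hp h).symm))]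
        exact Finset.sum_nonneg (fun _ _ => mul_self_nonneg _)
      · exact le_rfl
    intro u v hadj
    have h1 := (Finset.sum_eq_zero_iff_of_nonneg (fun u _ =>
      Finset.sum_nonneg (fun v _ => hT0 u v))).1 hT u (Finset.mem_univ _)
    have h2 := (Finset.sum_eq_zero_iff_of_nonneg (fun v _ => hT0 u v)).1 h1 v (Finset.mem_univ _)
    simp only [T, if_pos hadj] at h2
    rw [proj_quad _ _ (sub_ne_zero.2 (fun h => hadj.ne (hp h).symm)), dotProduct_self_eq_zero] at h2
    refine ⟨-(((p v - p u) ⬝ᵥ (p v - p u))⁻¹ *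
      ((p v - p u) ⬝ᵥ (fun l => x (u, l) - x (v, l)))), fun k => ?_⟩
    have h3 := congrFun h2 k
    simp only [Pi.sub_apply, Pi.smul_apply, smul_eq_mul, Pi.zero_apply] at h3
    linarith
  · intro h
    ext ⟨u, k⟩
    rw [lap_mulVec]
    apply Finset.sum_eq_zero
    intro v _
    split_ifs with hadj
    · obtain ⟨c, hc⟩ := h u v hadj
      have e : (fun l => x (u, l) - x (v, l)) = (-c) • (p v - p u) := by
        ext l; rw [hc]; simp; ring
      have hg : (p v - p u) ⬝ᵥ (p v - p u) ≠ 0 := by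
        rw [ne_eq, dotProduct_self_eq_zero]
        exact sub_ne_zero.2 (fun h => hadj.ne (hp h).symm)
      rw [e, Matrix.mulVec_smul, proj_mulVec, inv_mul_cancel₀ hg]
      simp
    · rfl

theorem stmt16 {n : ℕ} (G : SimpleGraph (Fin n)) (hG : IsLaman G)
    (d : ℕ) (hd : 2 ≤ d) :
    ∃ p : Fin n → Fin d → ℝ, Function.Injective p ∧
      (bearingLaplacian G p).rank = d * n - d - 1 := by
  classical
  obtain ⟨hc, hsp⟩ := hG
  rcases Nat.lt_or_ge n 2 with hn | hn
  · have hsub : Subsingleton (Fin n) := ⟨fun a b => Fin.ext (by omega)⟩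
    refine ⟨0, Function.injective_of_subsingleton _, ?_⟩
    have h0 : bearingLaplacian G (0 : Fin n → Fin d → ℝ) = 0 := by
      ext ⟨u, k⟩ ⟨v, l⟩
      have : G = ⊥ := Subsingleton.elim _ _
      subst this
      simp [bearingLaplacian]
    rw [h0, Matrix.rank_zero]
    have : d * n ≤ d * 1 := Nat.mul_le_mul_left d (by omega)
    omega
  have hout : ∀ e : G.edgeFinset, s((Quot.out e.1).1, (Quot.out e.1).2) = e.1 := by
    intro e
    exact Quot.out_eq e.1
  let s : G.edgeFinset → Fin n := fun e => (Quot.out e.1).1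
  let t : G.edgeFinset → Fin n := fun e => (Quot.out e.1).2
  have hadj : ∀ e, G.Adj (s e) (t e) := by
    intro e
    have := e.2
    rw [← hout e, SimpleGraph.mem_edgeFinset, SimpleGraph.mem_edgeSet] at this
    exact this
  have hcard : Fintype.card G.edgeFinset + 3 = 2 * Fintype.card (Fin n) := by
    rw [Fintype.card_coe, Fintype.card_fin]
    have : G.edgeFinset.card = 2 * n - 3 := by convert hc
    omega
  have hsp' : ∀ S : Finset (Fin n), 2 ≤ S.card →
      (Finset.univ.filter (fun e => s e ∈ S ∧ t e ∈ S)).card + 3 ≤ 2 * S.card := by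
    intro S hS
    have h1 : (G.edgeFinset.filter (fun e => ∀ v ∈ e, v ∈ S)).card ≤ 2 * S.card - 3 := by
      convert hsp S hS
    have h2 : (Finset.univ.filter (fun e => s e ∈ S ∧ t e ∈ S)).card ≤
        (G.edgeFinset.filter (fun e => ∀ v ∈ e, v ∈ S)).card := by
      apply Finset.card_le_card_of_injOn (fun e => e.1)
      · intro e he
        simp only [Finset.coe_filter, Finset.mem_univ, true_and, Set.mem_ofPred_eq] at he ⊢
        refine ⟨e.2, ?_⟩
        rw [← hout e]
        intro v hv
        rcases Sym2.mem_iff.1 hv with rfl | rfl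
        · exact he.1
        · exact he.2
      · exact Subtype.val_injective.injOn
    omega
  have hpos : 0 < Fintype.card G.edgeFinset := by
    rw [Fintype.card_fin] at hcard; omega
  obtain ⟨e0⟩ := Fintype.card_pos_iff.1 hpos
  obtain ⟨P, hPi, hPq, hPf⟩ := planar s t (fun e => (hadj e).ne) hcard hsp' e0
  let p : Fin n → Fin d → ℝ := fun v k => if h : k.1 < 2 then P (v, ⟨k.1, h⟩) else 0
  let ι2 : Fin 2 → Fin d := Fin.castLE hd
  have hp2 : ∀ v k, p v (ι2 k) = P (v, k) := by
    intro v k; exact dif_pos k.2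
  have hpinj : Function.Injective p := by
    intro u v h
    apply hPi
    intro k
    rw [← hp2, ← hp2, h]
  refine ⟨p, hpinj, ?_⟩
  let Ψ : ((Fin d → ℝ) × ℝ) →ₗ[ℝ] (Fin n × Fin d → ℝ) :=
    { toFun := fun w r => w.1 r.2 + w.2 * p r.1 r.2
      map_add' := by intro x y; ext r; simp; ring
      map_smul' := by intro c x; ext r; simp; ring }
  have hΨ : ∀ w v k, Ψ w (v, k) = w.1 k + w.2 * p v k := fun _ _ _ => rfl
  have hΨi : Function.Injective Ψ := by
    rw [← LinearMap.ker_eq_bot, LinearMap.ker_eq_bot']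
    intro w hw
    have h1 : ∀ v k, w.1 k + w.2 * p v k = 0 := fun v k => congrFun hw (v, k)
    have h2 : w.2 = 0 := by
      by_contra h2
      apply (hadj e0).ne
      apply hpinj
      ext k
      have := (h1 (s e0) k).trans (h1 (t e0) k).symm
      exact mul_left_cancel₀ h2 (by linarith)
    have h3 : w.1 = 0 := by
      ext k
      have := h1 (s e0) k
      rw [h2] at this
      simpa using this
    exact Prod.ext h3 h2
  have hker : LinearMap.ker (bearingLaplacian G p).mulVecLin = LinearMap.range Ψ := by
    ext x
    rw [LinearMap.mem_ker, Matrix.mulVecLin_apply, lap_ker G p hpinj]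
    constructor
    · intro h
      obtain ⟨c, w, hcw⟩ := hPq (fun r => x (r.1, ι2 r.2)) (by
        intro e
        obtain ⟨c, hc⟩ := h _ _ (hadj e)
        refine ⟨c, fun k => ?_⟩
        rw [← hp2, ← hp2]
        exact hc _)
      refine ⟨(fun k => if h : k.1 < 2 then w ⟨k.1, h⟩ else x (s e0, k), c), ?_⟩
      ext ⟨v, k⟩
      rw [hΨ]
      by_cases hk : k.1 < 2
      · have := hcw v ⟨k.1, hk⟩
        simp only [p, hk, dif_pos]
        rw [← this]
        rfl
      · simp only [p, hk, dif_neg, not_false_eq_true, mul_zero, add_zero]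
        apply hPf (fun v => x (v, k))
        intro e
        obtain ⟨c, hc⟩ := h _ _ (hadj e)
        have := hc k
        simp only [p, hk, dif_neg, not_false_eq_true, sub_self, mul_zero] at this
        linarith
    · rintro ⟨w, rfl⟩ u v _
      refine ⟨w.2, fun k => ?_⟩
      rw [hΨ, hΨ]; ring
  have hfr := LinearMap.finrank_range_of_inj hΨi
  have hrn := LinearMap.finrank_range_add_finrank_ker (bearingLaplacian G p).mulVecLin
  rw [hker, hfr] at hrn
  simp only [Module.finrank_prod, Module.finrank_fintype_fun_eq_card, Fintype.card_fin,
    Fintype.card_prod, Module.finrank_self] at hrn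
  rw [Matrix.rank, mul_comm d n]
  omega
end

section
/- If a graph G contains a spanning subgraph that is Laman, then G is generically bearing rigid in R^d for every d >= 2. -/
open Matrix

namespace Bear
open scoped Classical in
/-- number of edges spanned by `S` -/
noncomputable def cnt {n : ℕ} (E : Finset (Sym2 (Fin n))) (S : Finset (Fin n)) : ℕ :=
  (E.filter (fun e => ∀ v ∈ e, v ∈ S)).card

/-- Laman condition on the vertex subset `U` -/
def Lam {n : ℕ} (U : Finset (Fin n)) (E : Finset (Sym2 (Fin n))) : Prop :=
  cnt E U + 3 = 2 * U.card ∧ ∀ S ⊆ U, 2 ≤ S.card → cnt E S + 3 ≤ 2 * S.card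

/-- number of neighbours of `v` in `S` -/
def dg {n : ℕ} (E : Finset (Sym2 (Fin n))) (S : Finset (Fin n)) (v : Fin n) : ℕ :=
  (S.filter (fun w => s(v, w) ∈ E)).card

variable {n : ℕ}

lemma cnt_insert (E : Finset (Sym2 (Fin n))) (hE : ∀ v, s(v, v) ∉ E) (S : Finset (Fin n))
    (v : Fin n) (hv : v ∉ S) : cnt E (insert v S) = cnt E S + dg E S v := by
  classical
  unfold cnt dg
  have hinj : Function.Injective (fun w : Fin n => s(v, w)) := by
    intro x y hxy
    simp only [Sym2.eq_iff] at hxy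
    rcases hxy with h | h
    · exact h.2
    · exact h.2.trans h.1
  rw [← Finset.card_image_of_injective _ hinj, ← Finset.card_union_of_disjoint]
  · congr 1
    ext e
    induction e using Sym2.ind with
    | _ x y =>
      simp only [Finset.mem_filter, Finset.mem_union, Finset.mem_image, Sym2.mem_iff,
        forall_eq_or_imp, forall_eq, Finset.mem_insert, Sym2.eq_iff]
      constructor
      · rintro ⟨h, hx, hy⟩
        rcases hx with rfl | hx
        · rcases hy with rfl | hy
          · exact absurd h (hE _)
          · right; exact ⟨y, ⟨hy, h⟩, by simp⟩
        · rcases hy with rfl | hy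
          · right; exact ⟨x, ⟨hx, by rwa [Sym2.eq_swap]⟩, by simp⟩
          · left; exact ⟨h, hx, hy⟩
      · rintro (⟨h, hx, hy⟩ | ⟨w, ⟨hw, h⟩, (⟨rfl, rfl⟩ | ⟨rfl, rfl⟩)⟩)
        · exact ⟨h, Or.inr hx, Or.inr hy⟩
        · exact ⟨h, Or.inl rfl, Or.inr hw⟩
        · exact ⟨by rwa [Sym2.eq_swap], Or.inr hw, Or.inl rfl⟩
  · rw [Finset.disjoint_left]
    intro e he he'
    simp only [Finset.mem_filter, Finset.mem_image] at he he'
    obtain ⟨w, -, rfl⟩ := he'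
    exact hv (he.2 v (by simp))

lemma sum_dg (E : Finset (Sym2 (Fin n))) (hE : ∀ v, s(v, v) ∉ E) (U : Finset (Fin n)) :
    ∑ v ∈ U, dg E U v = 2 * cnt E U := by
  classical
  induction U using Finset.induction_on with
  | empty =>
    simp only [Finset.sum_empty]
    symm
    simp only [cnt, Nat.mul_eq_zero, Finset.card_eq_zero, Finset.filter_eq_empty_iff]
    right
    intro e _
    induction e using Sym2.ind with
    | _ x y => exact fun h => absurd (h x (by simp)) (by simp)
  | insert v S hv ih =>
    rw [Finset.sum_insert hv, cnt_insert E hE S v hv]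
    have h1 : dg E (insert v S) v = dg E S v := by
      unfold dg
      rw [Finset.filter_insert, if_neg (hE v)]
    have h2 : ∀ w ∈ S, dg E (insert v S) w = dg E S w + if s(v, w) ∈ E then 1 else 0 := by
      intro w hw
      unfold dg
      rw [Finset.filter_insert, Sym2.eq_swap (a := w) (b := v)]
      split_ifs with h
      · rw [Finset.card_insert_of_notMem]
        simp [hv]
      · rfl
    rw [h1, Finset.sum_congr rfl h2, Finset.sum_add_distrib, ih]
    have : ∑ w ∈ S, (if s(v, w) ∈ E then 1 else 0) = dg E S v := by
      unfold dg
      rw [Finset.card_filter]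
    rw [this]; ring

lemma cnt_submod (E : Finset (Sym2 (Fin n))) (S T : Finset (Fin n)) :
    cnt E S + cnt E T ≤ cnt E (S ∪ T) + cnt E (S ∩ T) := by
  classical
  unfold cnt
  rw [← Finset.card_union_add_card_inter]
  apply Nat.add_le_add
  · apply Finset.card_le_card
    intro e he
    simp only [Finset.mem_union, Finset.mem_filter] at he ⊢
    rcases he with he | he
    · exact ⟨he.1, fun v hv => Or.inl (he.2 v hv)⟩
    · exact ⟨he.1, fun v hv => Or.inr (he.2 v hv)⟩
  · apply Finset.card_le_card
    intro e he
    simp only [Finset.mem_inter, Finset.mem_filter] at he ⊢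
    exact ⟨he.1.1, fun v hv => ⟨he.1.2 v hv, he.2.2 v hv⟩⟩

lemma cnt_small (E : Finset (Sym2 (Fin n))) (hE : ∀ v, s(v, v) ∉ E) (S : Finset (Fin n))
    (hS : S.card ≤ 1) : cnt E S = 0 := by
  classical
  unfold cnt
  rw [Finset.card_eq_zero, Finset.filter_eq_empty_iff]
  intro e he h
  induction e using Sym2.ind with
  | _ x y =>
    have := Finset.card_le_one.mp hS x (h x (by simp)) y (h y (by simp))
    subst this
    exact hE _ he

/-- edges of three pairwise almost disjoint sets -/
lemma cnt_three (E : Finset (Sym2 (Fin n))) (hE : ∀ v, s(v, v) ∉ E) (S T R : Finset (Fin n))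
    (h1 : (S ∩ T).card ≤ 1) (h2 : (S ∩ R).card ≤ 1) (h3 : (T ∩ R).card ≤ 1) :
    cnt E S + cnt E T + cnt E R ≤ cnt E (S ∪ T ∪ R) := by
  classical
  have key : ∀ A B : Finset (Fin n), (A ∩ B).card ≤ 1 →
      Disjoint (E.filter (fun e => ∀ v ∈ e, v ∈ A)) (E.filter (fun e => ∀ v ∈ e, v ∈ B)) := by
    intro A B h
    have := cnt_small E hE (A ∩ B) h
    unfold cnt at this
    rw [Finset.card_eq_zero, Finset.filter_eq_empty_iff] at this
    rw [Finset.disjoint_left]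
    intro e he he'
    simp only [Finset.mem_filter] at he he'
    exact this he.1 (fun v hv => Finset.mem_inter.mpr ⟨he.2 v hv, he'.2 v hv⟩)
  unfold cnt
  rw [← Finset.card_union_of_disjoint (key S T h1), ← Finset.card_union_of_disjoint]
  · apply Finset.card_le_card
    intro e he
    simp only [Finset.mem_union, Finset.mem_filter] at he ⊢
    rcases he with (he | he) | he
    · exact ⟨he.1, fun v hv => Or.inl (Or.inl (he.2 v hv))⟩
    · exact ⟨he.1, fun v hv => Or.inl (Or.inr (he.2 v hv))⟩
    · exact ⟨he.1, fun v hv => Or.inr (he.2 v hv)⟩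
  · rw [Finset.disjoint_union_left]
    exact ⟨key S R h2, key T R h3⟩

lemma bad (E : Finset (Sym2 (Fin n))) (W : Finset (Fin n)) (a b : Fin n) (hab : a ≠ b)
    (ha : a ∈ W) (hb : b ∈ W) (hW : cnt E W + 4 = 2 * W.card)
    (hs : ∀ S ⊆ W, 2 ≤ S.card → cnt E S + 3 ≤ 2 * S.card)
    (hbad : ¬ Lam W (insert s(a, b) E)) :
    ∃ S ⊆ W, a ∈ S ∧ b ∈ S ∧ cnt E S + 3 = 2 * S.card := by
  classical
  by_contra hcon
  push Not at hcon
  have h4 : ∀ S ⊆ W, a ∈ S → b ∈ S → cnt E S + 4 ≤ 2 * S.card := by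
    intro S hS haS hbS
    have h2 : 2 ≤ S.card := by
      have : ({a, b} : Finset (Fin n)).card ≤ S.card := Finset.card_le_card (by
        intro x hx; simp at hx; rcases hx with rfl | rfl <;> assumption)
      rwa [Finset.card_pair hab] at this
    have := hs S hS h2
    have := hcon S hS haS hbS
    omega
  have hnot : s(a, b) ∉ E := by
    intro h
    have := h4 {a, b} (by intro x hx; simp at hx; rcases hx with rfl | rfl <;> assumption)
      (by simp) (by simp)
    rw [Finset.card_pair hab] at this
    have h0 : cnt E {a, b} = 0 := by omega
    unfold cnt at h0
    rw [Finset.card_eq_zero, Finset.filter_eq_empty_iff] at h0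
    exact h0 h (by simp)
  have hins : ∀ S, a ∈ S → b ∈ S → cnt (insert s(a, b) E) S = cnt E S + 1 := by
    intro S haS hbS
    unfold cnt
    rw [Finset.filter_insert, if_pos (by simp [haS, hbS]), Finset.card_insert_of_notMem]
    simp [hnot]
  have hins' : ∀ S, ¬ (a ∈ S ∧ b ∈ S) → cnt (insert s(a, b) E) S = cnt E S := by
    intro S h
    unfold cnt
    rw [Finset.filter_insert, if_neg (by simpa using h)]
  apply hbad
  refine ⟨by rw [hins W ha hb]; omega, fun S hS h2 => ?_⟩
  by_cases h : a ∈ S ∧ b ∈ S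
  · rw [hins S h.1 h.2]
    have := h4 S hS h.1 h.2
    omega
  · rw [hins' S h]
    exact hs S hS h2

lemma two_tight (E : Finset (Sym2 (Fin n))) (W : Finset (Fin n))
    (hs : ∀ S ⊆ W, 2 ≤ S.card → cnt E S + 3 ≤ 2 * S.card)
    (S T : Finset (Fin n)) (hS : S ⊆ W) (hT : T ⊆ W)
    (h1 : cnt E S + 3 = 2 * S.card) (h2 : cnt E T + 3 = 2 * T.card)
    (h : ¬ (S ∩ T).card ≤ 1) : 2 * (S ∪ T).card ≤ cnt E (S ∪ T) + 3 := by
  have := hs (S ∩ T) (Finset.inter_subset_left.trans hS) (by omega)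
  have := cnt_submod E S T
  have := Finset.card_union_add_card_inter S T
  omega

lemma henneberg (E : Finset (Sym2 (Fin n))) (hE : ∀ v, s(v, v) ∉ E) (U : Finset (Fin n))
    (hL : Lam U E) (hU : 3 ≤ U.card) :
    ∃ v ∈ U,
      (∃ a ∈ U.erase v, ∃ b ∈ U.erase v, a ≠ b ∧ s(v, a) ∈ E ∧ s(v, b) ∈ E ∧
        Lam (U.erase v) E) ∨
      (∃ a ∈ U.erase v, ∃ b ∈ U.erase v, ∃ c ∈ U.erase v, a ≠ b ∧ a ≠ c ∧ b ≠ c ∧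
        s(v, a) ∈ E ∧ s(v, b) ∈ E ∧ s(v, c) ∈ E ∧ Lam (U.erase v) (insert s(a, b) E)) := by
  classical
  obtain ⟨hc, hs⟩ := hL
  have hdeg : ∃ v ∈ U, dg E U v ≤ 3 := by
    by_contra hcon
    push Not at hcon
    have h1 := sum_dg E hE U
    have h2 : ∑ v ∈ U, 4 ≤ ∑ v ∈ U, dg E U v := Finset.sum_le_sum (fun v hv => hcon v hv)
    simp at h2
    omega
  obtain ⟨v, hv, hd⟩ := hdeg
  refine ⟨v, hv, ?_⟩
  have hvW : v ∉ U.erase v := Finset.notMem_erase v U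
  have hUW : insert v (U.erase v) = U := Finset.insert_erase hv
  have hci := cnt_insert E hE (U.erase v) v hvW
  rw [hUW] at hci
  have hcard : (U.erase v).card + 1 = U.card := Finset.card_erase_add_one hv
  have hdW : dg E U v = dg E (U.erase v) v := by
    conv_lhs => rw [← hUW]
    unfold dg
    rw [Finset.filter_insert, if_neg (hE v)]
  have hsW : ∀ S ⊆ U.erase v, 2 ≤ S.card → cnt E S + 3 ≤ 2 * S.card :=
    fun S hS => hs S (hS.trans (Finset.erase_subset _ _))
  have hWW := hsW _ (Finset.Subset.refl _) (by omega)
  generalize hWdef : U.erase v = W at *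
  have h23 : dg E W v = 2 ∨ dg E W v = 3 := by omega
  rcases h23 with h2 | h3
  · left
    have h2' := h2
    unfold dg at h2'
    obtain ⟨a, b, hab, hN⟩ := Finset.card_eq_two.mp h2'
    have ha : a ∈ W.filter (fun w => s(v, w) ∈ E) := by rw [hN]; simp
    have hb : b ∈ W.filter (fun w => s(v, w) ∈ E) := by rw [hN]; simp
    rw [Finset.mem_filter] at ha hb
    exact ⟨a, ha.1, b, hb.1, hab, ha.2, hb.2, by omega, hsW⟩
  · right
    have h3' := h3
    unfold dg at h3'
    obtain ⟨a, b, c, hab, hac, hbc, hN⟩ := Finset.card_eq_three.mp h3'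
    have ha : a ∈ W.filter (fun w => s(v, w) ∈ E) := by rw [hN]; simp
    have hb : b ∈ W.filter (fun w => s(v, w) ∈ E) := by rw [hN]; simp
    have hcc : c ∈ W.filter (fun w => s(v, w) ∈ E) := by rw [hN]; simp
    rw [Finset.mem_filter] at ha hb hcc
    have hW4 : cnt E W + 4 = 2 * W.card := by omega
    -- no tight set contains all three neighbours
    have hno : ∀ S ⊆ W, a ∈ S → b ∈ S → c ∈ S → ¬ 2 * S.card ≤ cnt E S + 3 := by
      intro S hS haS hbS hcS ht
      have hvS : v ∉ S := fun h => hvW (hS h)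
      have e1 := cnt_insert E hE S v hvS
      have e2 : 3 ≤ dg E S v := by
        unfold dg
        rw [← h3', hN]
        apply Finset.card_le_card
        intro x hx
        simp only [Finset.mem_insert, Finset.mem_singleton] at hx
        rcases hx with rfl | rfl | rfl
        · simp [haS, ha.2]
        · simp [hbS, hb.2]
        · simp [hcS, hcc.2]
      have e3 := Finset.card_insert_of_notMem hvS
      have e4 : insert v S ⊆ U := by
        rw [← hUW]; exact Finset.insert_subset_insert _ hS
      have e5 : 1 ≤ S.card := Finset.card_pos.mpr ⟨a, haS⟩
      have e6 := hs _ e4 (by omega)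
      omega
    by_contra hcon
    push Not at hcon
    have n1 := hcon a ha.1 b hb.1 c hcc.1 hab hac hbc ha.2 hb.2 hcc.2
    have n2 := hcon a ha.1 c hcc.1 b hb.1 hac hab hbc.symm ha.2 hcc.2 hb.2
    have n3 := hcon b hb.1 c hcc.1 a ha.1 hbc hab.symm hac.symm hb.2 hcc.2 ha.2
    obtain ⟨S, hS, haS, hbS, tS⟩ := bad E W a b hab ha.1 hb.1 hW4 hsW n1
    obtain ⟨T, hT, haT, hcT, tT⟩ := bad E W a c hac ha.1 hcc.1 hW4 hsW n2
    obtain ⟨R, hR, hbR, hcR, tR⟩ := bad E W b c hbc hb.1 hcc.1 hW4 hsW n3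
    have i1 : (S ∩ T).card ≤ 1 := by
      by_contra h
      exact hno (S ∪ T) (Finset.union_subset hS hT) (by simp [haS]) (by simp [hbS])
        (by simp [hcT]) (two_tight E W hsW S T hS hT tS tT h)
    have i2 : (S ∩ R).card ≤ 1 := by
      by_contra h
      exact hno (S ∪ R) (Finset.union_subset hS hR) (by simp [haS]) (by simp [hbS])
        (by simp [hcR]) (two_tight E W hsW S R hS hR tS tR h)
    have i3 : (T ∩ R).card ≤ 1 := by
      by_contra h
      exact hno (T ∪ R) (Finset.union_subset hT hR) (by simp [haT]) (by simp [hbR])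
        (by simp [hcR]) (two_tight E W hsW T R hT hR tT tR h)
    refine hno (S ∪ T ∪ R) (Finset.union_subset (Finset.union_subset hS hT) hR)
      (by simp [haS]) (by simp [hbS]) (by simp [hcT]) ?_
    have hthree := cnt_three E hE S T R i1 i2 i3
    have u1 := Finset.card_union_add_card_inter S T
    have u2 := Finset.card_union_add_card_inter (S ∪ T) R
    have p1 : 1 ≤ (S ∩ T).card := Finset.card_pos.mpr ⟨a, by simp [haS, haT]⟩
    have p2 : 2 ≤ ((S ∪ T) ∩ R).card := by
      rw [← Finset.card_pair hbc]
      apply Finset.card_le_card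
      intro x hx
      simp only [Finset.mem_insert, Finset.mem_singleton] at hx
      rcases hx with rfl | rfl
      · simp [hbS, hbR]
      · simp [hcT, hcR]
    omega

end Bear

namespace Bear
variable {n d : ℕ}

/-- parallel vectors -/
def Par (x y : Fin d → ℝ) : Prop := ∀ k l, x k * y l = x l * y k

/-- infinitesimal bearing rigidity on the vertex subset `U` -/
def Rig (U : Finset (Fin n)) (E : Finset (Sym2 (Fin n))) (p : Fin n → Fin d → ℝ) : Prop :=
  ∀ u : Fin n → Fin d → ℝ,
    (∀ i ∈ U, ∀ j ∈ U, s(i, j) ∈ E → Par (u i - u j) (p i - p j)) →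
    ∃ (c : ℝ) (w : Fin d → ℝ), ∀ i ∈ U, u i = c • p i + w

/-- general position with respect to two coordinates -/
def Good (k l : Fin d) (U : Finset (Fin n)) (p : Fin n → Fin d → ℝ) : Prop :=
  (∀ a ∈ U, ∀ b ∈ U, a ≠ b → p a k ≠ p b k) ∧
  ∀ a ∈ U, ∀ b ∈ U, ∀ c ∈ U, a ≠ b → a ≠ c → b ≠ c →
    (p b k - p a k) * (p c l - p a l) - (p b l - p a l) * (p c k - p a k) ≠ 0

lemma Par.exists_smul {x y : Fin d → ℝ} (h : Par x y) {k : Fin d} (hk : y k ≠ 0) :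
    ∃ c : ℝ, x = c • y := by
  refine ⟨x k / y k, funext fun l => ?_⟩
  have := h k l
  simp only [Pi.smul_apply, smul_eq_mul]
  field_simp
  linarith

/-- the constraint map -/
def cons (U : Finset (Fin n)) (E : Finset (Sym2 (Fin n))) (a b : Fin n)
    (p : Fin n → Fin d → ℝ) :
    (Fin n × Fin d → ℝ) →ₗ[ℝ]
      ((Fin n × Fin n × Fin d × Fin d → ℝ) × (Fin n × Fin d → ℝ) × ℝ) where
  toFun u :=
    (fun q => if q.1 ∈ U ∧ q.2.1 ∈ U ∧ s(q.1, q.2.1) ∈ E then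
        (u (q.1, q.2.2.1) - u (q.2.1, q.2.2.1)) * (p q.1 q.2.2.2 - p q.2.1 q.2.2.2) -
        (u (q.1, q.2.2.2) - u (q.2.1, q.2.2.2)) * (p q.1 q.2.2.1 - p q.2.1 q.2.2.1) else 0,
      fun q => if q.1 ∈ U ∧ q.1 ≠ a then 0 else u q,
      ∑ k, u (b, k) * (p b k - p a k))
  map_add' u v := by
    ext q
    · simp only [Pi.add_apply, Prod.fst_add]; split_ifs <;> ring
    · simp only [Pi.add_apply, Prod.fst_add, Prod.snd_add]; split_ifs <;> ring
    · simp only [Pi.add_apply, Prod.snd_add, ← Finset.sum_add_distrib]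
      exact Finset.sum_congr rfl (fun _ _ => by ring)
  map_smul' c u := by
    ext q
    · simp only [Pi.smul_apply, Prod.smul_fst, smul_eq_mul, RingHom.id_apply]; split_ifs <;> ring
    · simp only [Pi.smul_apply, Prod.smul_fst, Prod.smul_snd, smul_eq_mul, RingHom.id_apply]
      split_ifs <;> ring
    · simp only [Pi.smul_apply, Prod.smul_snd, smul_eq_mul, RingHom.id_apply, Finset.mul_sum]
      exact Finset.sum_congr rfl (fun _ _ => by ring)

lemma sumsq_ne (x : Fin d → ℝ) (h : x ≠ 0) : ∑ k, x k * x k ≠ 0 := by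
  intro h0
  apply h
  exact dotProduct_self_eq_zero.mp h0

lemma cons_inj (U : Finset (Fin n)) (E : Finset (Sym2 (Fin n))) (a b : Fin n)
    (ha : a ∈ U) (hb : b ∈ U) (p : Fin n → Fin d → ℝ) (hab : p a ≠ p b) (hR : Rig U E p) :
    LinearMap.ker (cons U E a b p) = ⊥ := by
  rw [LinearMap.ker_eq_bot']
  intro u hu
  simp only [cons, LinearMap.coe_mk, AddHom.coe_mk, Prod.mk_eq_zero] at hu
  obtain ⟨h1, h2, h3⟩ := hu
  obtain ⟨c, w, hcw⟩ := hR (fun i k => u (i, k)) (by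
    intro i hi j hj hij k l
    have := congrFun h1 (i, j, k, l)
    simp only [hi, hj, hij, and_self, if_true, Pi.zero_apply] at this
    simp only [Pi.sub_apply]
    linarith)
  have hua : ∀ k, u (a, k) = 0 := by
    intro k
    have := congrFun h2 (a, k)
    simpa using this
  have hw : ∀ k, w k = - c * p a k := by
    intro k
    have := congrFun (hcw a ha) k
    simp only [hua, Pi.add_apply, Pi.smul_apply, smul_eq_mul] at this
    linarith
  have hub : ∀ i ∈ U, ∀ k, u (i, k) = c * (p i k - p a k) := by
    intro i hi k
    have := congrFun (hcw i hi) k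
    simp only [Pi.add_apply, Pi.smul_apply, smul_eq_mul, hw] at this
    linarith
  have hc : c = 0 := by
    have h4 : c * ∑ k, (p b - p a) k * (p b - p a) k = 0 := by
      rw [← h3, Finset.mul_sum]
      refine Finset.sum_congr rfl (fun k _ => ?_)
      rw [hub b hb]
      simp only [Pi.sub_apply]; ring
    rcases mul_eq_zero.mp h4 with h | h
    · exact h
    · exact absurd h (sumsq_ne _ (sub_ne_zero.mpr hab.symm))
  funext ⟨i, k⟩
  by_cases hi : i ∈ U
  · rw [hub i hi, hc]; simp
  · have := congrFun h2 (i, k)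
    simpa [hi] using this

lemma rig_of_inj (U : Finset (Fin n)) (E : Finset (Sym2 (Fin n))) (a b : Fin n)
    (ha : a ∈ U) (hb : b ∈ U) (p : Fin n → Fin d → ℝ) (hab : p a ≠ p b)
    (hk : LinearMap.ker (cons U E a b p) = ⊥) : Rig U E p := by
  classical
  intro u hu
  set s : ℝ := ∑ k, (p b - p a) k * (p b - p a) k with hs
  have hs0 : s ≠ 0 := sumsq_ne _ (sub_ne_zero.mpr hab.symm)
  set c : ℝ := (∑ k, (u b k - u a k) * (p b k - p a k)) / s with hc
  refine ⟨c, u a - c • p a, ?_⟩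
  rw [LinearMap.ker_eq_bot'] at hk
  have := hk (fun q => if q.1 ∈ U then u q.1 q.2 - u a q.2 - c * (p q.1 q.2 - p a q.2) else 0) (by
    simp only [cons, LinearMap.coe_mk, AddHom.coe_mk, Prod.mk_eq_zero]
    refine ⟨?_, ?_, ?_⟩
    · funext ⟨i, j, k, l⟩
      simp only [Pi.zero_apply]
      split_ifs with h1 h2 h3
      · have := hu i h1.1 j h1.2.1 h1.2.2 k l
        simp only [Pi.sub_apply] at this
        linear_combination this
      · exact absurd h1.2.1 h3
      · exact absurd h1.1 h2
      · exact absurd h1.1 h2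
      · rfl
    · funext ⟨i, k⟩
      simp only [Pi.zero_apply]
      by_cases hi : i = a
      · subst hi; simp
      · by_cases hiU : i ∈ U <;> simp [hi, hiU]
    · simp only [hb, if_true]
      have : ∀ k, (u b k - u a k - c * (p b k - p a k)) * (p b k - p a k) =
        (u b k - u a k) * (p b k - p a k) - c * ((p b - p a) k * (p b - p a) k) := by
        intro k; simp only [Pi.sub_apply]; ring
      simp only [this]
      rw [Finset.sum_sub_distrib, ← Finset.mul_sum, ← hs, hc]
      field_simp
      ring)
  intro i hi
  funext k
  have := congrFun this (i, k)
  simp only [hi, if_true, Pi.zero_apply] at this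
  simp only [Pi.add_apply, Pi.sub_apply, Pi.smul_apply, smul_eq_mul]
  linarith

lemma ker_iff (U : Finset (Fin n)) (E : Finset (Sym2 (Fin n))) (a b : Fin n)
    (p : Fin n → Fin d → ℝ) :
    LinearMap.ker (cons U E a b p) = ⊥ ↔
      LinearIndependent ℝ (fun q => cons U E a b p (Pi.basisFun ℝ (Fin n × Fin d) q)) := by
  constructor
  · intro h
    exact (Pi.basisFun ℝ (Fin n × Fin d)).linearIndependent.map' _ h
  · intro h
    rw [LinearMap.ker_eq_bot']
    intro u hu
    rw [Fintype.linearIndependent_iff] at h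
    have := h u (by
      simp only [← map_smul, ← map_sum]
      rw [← hu]
      congr 1
      have := (Pi.basisFun ℝ (Fin n × Fin d)).sum_repr u
      simpa using this)
    exact funext this

lemma fin_quad (α β γ : ℝ) (h : α ≠ 0) : {t : ℝ | α * t ^ 2 + β * t + γ = 0}.Finite := by
  set P : Polynomial ℝ := Polynomial.C α * Polynomial.X ^ 2 + Polynomial.C β * Polynomial.X +
    Polynomial.C γ with hP
  have hP0 : P ≠ 0 := by
    intro h0
    have := Polynomial.natDegree_quadratic (b := β) (c := γ) h
    rw [← hP, h0] at this
    simp at this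
  refine (P.roots.toFinset.finite_toSet).subset ?_
  intro t ht
  simp only [Set.mem_ofPred_eq] at ht
  have : P.IsRoot t := by simp [Polynomial.IsRoot, hP, ht]
  simpa [hP0] using this

lemma fin_lin (β γ : ℝ) (h : β ≠ 0) : {t : ℝ | β * t + γ = 0}.Finite := by
  refine (Set.finite_singleton (-γ / β)).subset ?_
  intro t ht
  simp only [Set.mem_ofPred_eq, Set.mem_singleton_iff] at ht ⊢
  field_simp
  linarith

/-- moment curve perturbation -/
def mom (k l : Fin d) (p : Fin n → Fin d → ℝ) (t : ℝ) : Fin n → Fin d → ℝ :=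
  fun i m => p i m + t * (if m = k then (i : ℝ) else if m = l then (i : ℝ) ^ 2 else 0)

lemma perturb (k l : Fin d) (hkl : k ≠ l) (U : Finset (Fin n)) (E : Finset (Sym2 (Fin n)))
    (a b : Fin n) (ha : a ∈ U) (hb : b ∈ U) (p : Fin n → Fin d → ℝ) (hab : p a ≠ p b)
    (hR : Rig U E p) : ∃ p' : Fin n → Fin d → ℝ, Good k l U p' ∧ Rig U E p' := by
  classical
  have hne : a ≠ b := fun h => hab (by rw [h])
  have hopen : IsOpen {t : ℝ | LinearMap.ker (cons U E a b (mom k l p t)) = ⊥} := by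
    simp only [ker_iff]
    have hc : Continuous (fun t : ℝ => fun q : Fin n × Fin d =>
        cons U E a b (mom k l p t) (Pi.basisFun ℝ (Fin n × Fin d) q)) := by
      refine continuous_pi fun q => ?_
      simp only [cons, LinearMap.coe_mk, AddHom.coe_mk, mom]
      refine Continuous.prodMk ?_ (Continuous.prodMk ?_ ?_)
      · refine continuous_pi fun r => ?_
        by_cases h : r.1 ∈ U ∧ r.2.1 ∈ U ∧ s(r.1, r.2.1) ∈ E
        · simp only [h, and_self, if_true]; fun_prop
        · simp only [h, if_false]; fun_prop
      · fun_prop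
      · fun_prop
    exact isOpen_setOfPred_linearIndependent.preimage hc
  have h0 : (0 : ℝ) ∈ {t : ℝ | LinearMap.ker (cons U E a b (mom k l p t)) = ⊥} := by
    have : mom k l p 0 = p := by funext i m; simp [mom]
    simp only [Set.mem_ofPred_eq, this]
    exact cons_inj U E a b ha hb p hab hR
  have hinf := infinite_of_mem_nhds (0 : ℝ) (hopen.mem_nhds h0)
  have hcast : ∀ x y : Fin n, x ≠ y → (x : ℝ) - (y : ℝ) ≠ 0 := by
    intro x y hxy h
    apply hxy
    have : ((x : ℕ) : ℝ) = (y : ℕ) := by linarith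
    exact Fin.ext (by exact_mod_cast this)
  let B1 : Set ℝ := ⋃ q : {q : Fin n × Fin n // q.1 ≠ q.2},
    {t | mom k l p t q.1.1 k = mom k l p t q.1.2 k}
  have hB1 : B1.Finite := by
    refine Set.finite_iUnion ?_
    rintro ⟨⟨x, y⟩, hxy⟩
    refine (fin_lin ((x : ℝ) - y) (p x k - p y k) (hcast x y hxy)).subset ?_
    intro t ht
    simp only [Set.mem_ofPred_eq, mom, if_true] at ht ⊢
    linarith
  let B2 : Set ℝ := ⋃ q : {q : Fin n × Fin n × Fin n // q.1 ≠ q.2.1 ∧ q.1 ≠ q.2.2 ∧ q.2.1 ≠ q.2.2},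
    {t | (mom k l p t q.1.2.1 k - mom k l p t q.1.1 k) *
          (mom k l p t q.1.2.2 l - mom k l p t q.1.1 l) -
        (mom k l p t q.1.2.1 l - mom k l p t q.1.1 l) *
          (mom k l p t q.1.2.2 k - mom k l p t q.1.1 k) = 0}
  have hB2 : B2.Finite := by
    refine Set.finite_iUnion ?_
    rintro ⟨⟨x, y, z⟩, hxy, hxz, hyz⟩
    dsimp only at hxy hxz hyz
    have hα : ((y : ℝ) - x) * ((z : ℝ) - x) * ((z : ℝ) - y) ≠ 0 :=
      mul_ne_zero (mul_ne_zero (hcast _ _ hxy.symm) (hcast _ _ hxz.symm)) (hcast _ _ hyz.symm)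
    refine (fin_quad _ ((p y k - p x k) * ((z : ℝ) ^ 2 - (x : ℝ) ^ 2) +
      ((y : ℝ) - x) * (p z l - p x l) - (p y l - p x l) * ((z : ℝ) - x) -
      ((y : ℝ) ^ 2 - (x : ℝ) ^ 2) * (p z k - p x k))
      ((p y k - p x k) * (p z l - p x l) - (p y l - p x l) * (p z k - p x k)) hα).subset ?_
    intro t ht
    simp only [Set.mem_ofPred_eq, mom, if_true, if_neg hkl.symm] at ht ⊢
    linear_combination ht
  obtain ⟨t, ht, htB⟩ := (hinf.sdiff (hB1.union hB2)).nonempty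
  have hG : Good k l U (mom k l p t) := by
    refine ⟨?_, ?_⟩
    · intro x _ y _ hxy h
      exact htB (Or.inl (Set.mem_iUnion.mpr ⟨⟨(x, y), hxy⟩, h⟩))
    · intro x _ y _ z _ hxy hxz hyz h
      exact htB (Or.inr (Set.mem_iUnion.mpr ⟨⟨(x, y, z), hxy, hxz, hyz⟩, h⟩))
  refine ⟨_, hG, rig_of_inj U E a b ha hb _ ?_ ht⟩
  intro h
  exact hG.1 a ha b hb hne (congrFun h k)

/-- extension step, type I -/
lemma stepI (k l : Fin d) (hkl : k ≠ l) (U : Finset (Fin n)) (E : Finset (Sym2 (Fin n)))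
    (v a b : Fin n) (hv : v ∈ U) (ha : a ∈ U.erase v) (hb : b ∈ U.erase v) (hab : a ≠ b)
    (hva : s(v, a) ∈ E) (hvb : s(v, b) ∈ E)
    (p : Fin n → Fin d → ℝ) (hG : Good k l (U.erase v) p) (hR : Rig (U.erase v) E p) :
    ∃ p' : Fin n → Fin d → ℝ, Good k l U p' ∧ Rig U E p' := by
  classical
  have hav : a ≠ v := Finset.ne_of_mem_erase ha
  have hbv : b ≠ v := Finset.ne_of_mem_erase hb
  have haU : a ∈ U := Finset.mem_of_mem_erase ha
  have hbU : b ∈ U := Finset.mem_of_mem_erase hb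
  have hk := hG.1 a ha b hb hab
  let q : Fin n → Fin d → ℝ := Function.update p v (p a + Pi.single l 1)
  have hqv : q v = p a + Pi.single l 1 := by simp [q]
  have hq : ∀ i, i ≠ v → q i = p i := fun i hi => by simp [q, hi]
  refine perturb k l hkl U E a b haU hbU q ?_ ?_
  · rw [hq a hav, hq b hbv]
    exact fun h => hk (congrFun h k)
  · intro u hu
    obtain ⟨c, w, hcw⟩ := hR u (by
      intro i hi j hj hij
      have := hu i (Finset.mem_of_mem_erase hi) j (Finset.mem_of_mem_erase hj) hij
      rwa [hq i (Finset.ne_of_mem_erase hi), hq j (Finset.ne_of_mem_erase hj)] at this)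
    refine ⟨c, w, fun i hi => ?_⟩
    by_cases hiv : i = v
    · subst hiv
      have h1 := hu i hv a haU hva
      have h2 := hu i hv b hbU hvb
      rw [hqv, hq a hav, hcw a ha] at h1
      rw [hqv, hq b hbv, hcw b hb] at h2
      rw [hqv]
      obtain ⟨α, hα⟩ := h1.exists_smul (k := l) (by simp)
      obtain ⟨β, hβ⟩ := h2.exists_smul (k := k) (by
        simp [Pi.single_apply, hkl]; exact sub_ne_zero.mpr hk)
      have a1 := congrFun hα k
      have b1 := congrFun hβ k
      have a2 := congrFun hα l
      have b2 := congrFun hβ l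
      simp [hkl] at a1 a2 b1 b2
      have hβc : (β - c) * (p a k - p b k) = 0 := by linear_combination a1 - b1
      have hβ' : β = c := by
        rcases mul_eq_zero.mp hβc with h | h
        · linarith
        · exact absurd h (sub_ne_zero.mpr hk)
      funext m
      have b3 := congrFun hβ m
      simp only [Pi.sub_apply, Pi.add_apply, Pi.smul_apply, smul_eq_mul] at b3 ⊢
      rw [hβ'] at b3
      linarith
    · rw [hq i hiv]
      exact hcw i (Finset.mem_erase.mpr ⟨hiv, hi⟩)

/-- extension step, type II -/
lemma stepII (k l : Fin d) (hkl : k ≠ l) (U : Finset (Fin n)) (E : Finset (Sym2 (Fin n)))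
    (v a b c : Fin n) (hv : v ∈ U) (ha : a ∈ U.erase v) (hb : b ∈ U.erase v)
    (hc : c ∈ U.erase v) (hab : a ≠ b) (hac : a ≠ c) (hbc : b ≠ c)
    (hva : s(v, a) ∈ E) (hvb : s(v, b) ∈ E) (hvc : s(v, c) ∈ E)
    (p : Fin n → Fin d → ℝ) (hG : Good k l (U.erase v) p)
    (hR : Rig (U.erase v) (insert s(a, b) E) p) :
    ∃ p' : Fin n → Fin d → ℝ, Good k l U p' ∧ Rig U E p' := by
  classical
  have hav : a ≠ v := Finset.ne_of_mem_erase ha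
  have hbv : b ≠ v := Finset.ne_of_mem_erase hb
  have hcv : c ≠ v := Finset.ne_of_mem_erase hc
  have haU : a ∈ U := Finset.mem_of_mem_erase ha
  have hbU : b ∈ U := Finset.mem_of_mem_erase hb
  have hcU : c ∈ U := Finset.mem_of_mem_erase hc
  have hk := hG.1 a ha b hb hab
  have hdet := hG.2 a ha b hb c hc hab hac hbc
  let q : Fin n → Fin d → ℝ := Function.update p v ((1 / 2 : ℝ) • (p a + p b))
  have hqv : q v = (1 / 2 : ℝ) • (p a + p b) := by simp [q]
  have hq : ∀ i, i ≠ v → q i = p i := fun i hi => by simp [q, hi]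
  refine perturb k l hkl U E a b haU hbU q ?_ ?_
  · rw [hq a hav, hq b hbv]
    exact fun h => hk (congrFun h k)
  · intro u hu
    have h1 := hu v hv a haU hva
    have h2 := hu v hv b hbU hvb
    have h3 := hu v hv c hcU hvc
    rw [hqv, hq a hav] at h1
    rw [hqv, hq b hbv] at h2
    rw [hqv, hq c hcv] at h3
    have hPab : Par (u a - u b) (p a - p b) := by
      intro x y
      have e1 := h1 x y
      have e2 := h2 x y
      simp only [Pi.sub_apply, Pi.add_apply, Pi.smul_apply, smul_eq_mul] at e1 e2 ⊢
      linear_combination 2 * e1 + 2 * e2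
    obtain ⟨r, w, hcw⟩ := hR u (by
      intro i hi j hj hij
      rcases Finset.mem_insert.mp hij with hij | hij
      · rw [Sym2.eq_iff] at hij
        rcases hij with ⟨rfl, rfl⟩ | ⟨rfl, rfl⟩
        · exact hPab
        · intro x y
          have := hPab x y
          simp only [Pi.sub_apply] at this ⊢
          linarith
      · have := hu i (Finset.mem_of_mem_erase hi) j (Finset.mem_of_mem_erase hj) hij
        rwa [hq i (Finset.ne_of_mem_erase hi), hq j (Finset.ne_of_mem_erase hj)] at this)
    refine ⟨r, w, fun i hi => ?_⟩
    by_cases hiv : i = v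
    · subst hiv
      rw [hcw a ha] at h1
      rw [hcw c hc] at h3
      rw [hqv]
      obtain ⟨α, hα⟩ := h1.exists_smul (k := k) (by
        simp; intro h; apply hk; linarith)
      have hu' : ∀ m, u i m = r * p a m + w m + α * ((1 / 2) * (p b m - p a m)) := by
        intro m
        have := congrFun hα m
        simp only [Pi.sub_apply, Pi.add_apply, Pi.smul_apply, smul_eq_mul] at this
        linarith
      have e := h3 k l
      simp only [Pi.sub_apply, Pi.add_apply, Pi.smul_apply, smul_eq_mul, hu'] at e
      have hαr : (α - r) * ((p b k - p a k) * (p c l - p a l) -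
          (p b l - p a l) * (p c k - p a k)) = 0 := by
        linear_combination (-2) * e
      have hα' : α = r := by
        rcases mul_eq_zero.mp hαr with h | h
        · linarith
        · exact absurd h hdet
      funext m
      simp only [Pi.add_apply, Pi.smul_apply, smul_eq_mul]
      rw [hu', hα']
      ring
    · rw [hq i hiv]
      exact hcw i (Finset.mem_erase.mpr ⟨hiv, hi⟩)

lemma base (k l : Fin d) (hkl : k ≠ l) (U : Finset (Fin n)) (E : Finset (Sym2 (Fin n)))
    (hE : ∀ v, s(v, v) ∉ E) (hL : Lam U E) (hU : U.card = 2) :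
    ∃ p : Fin n → Fin d → ℝ, Good k l U p ∧ Rig U E p := by
  classical
  obtain ⟨a, b, hab, rfl⟩ := Finset.card_eq_two.mp hU
  have hE' : s(a, b) ∈ E := by
    have h1 : 0 < cnt E {a, b} := by have := hL.1; omega
    unfold cnt at h1
    obtain ⟨e, he⟩ := Finset.card_pos.mp h1
    rw [Finset.mem_filter] at he
    obtain ⟨he, h⟩ := he
    induction e using Sym2.ind with
    | _ x y =>
      have hx := h x (by simp)
      have hy := h y (by simp)
      simp only [Finset.mem_insert, Finset.mem_singleton] at hx hy
      rcases hx with rfl | rfl <;> rcases hy with rfl | rfl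
      · exact absurd he (hE _)
      · exact he
      · rwa [Sym2.eq_swap]
      · exact absurd he (hE _)
  let p : Fin n → Fin d → ℝ := Function.update 0 b (Pi.single k 1)
  have hpb : p b = Pi.single k 1 := by simp [p]
  have hpa : p a = 0 := by simp [p, hab]
  refine perturb k l hkl _ E a b (by simp) (by simp) p ?_ ?_
  · intro h
    have := congrFun h k
    simp [hpa, hpb] at this
  · intro u hu
    have h := hu b (by simp) a (by simp) (by rwa [Sym2.eq_swap])
    obtain ⟨c, hc⟩ := h.exists_smul (k := k) (by simp [hpa, hpb])
    refine ⟨c, u a, ?_⟩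
    intro i hi
    simp only [Finset.mem_insert, Finset.mem_singleton] at hi
    rcases hi with rfl | rfl
    · simp [hpa]
    · rw [hpa, sub_zero] at hc
      rw [← hc]; simp

lemma main (k l : Fin d) (hkl : k ≠ l) : ∀ (m : ℕ) (U : Finset (Fin n))
    (E : Finset (Sym2 (Fin n))), (∀ v, s(v, v) ∉ E) → Lam U E → U.card = m + 2 →
    ∃ p : Fin n → Fin d → ℝ, Good k l U p ∧ Rig U E p := by
  classical
  intro m
  induction m with
  | zero => intro U E hE hL hU; exact base k l hkl U E hE hL hU
  | succ m ih =>
    intro U E hE hL hU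
    obtain ⟨v, hv, h⟩ := henneberg E hE U hL (by omega)
    have hcard : (U.erase v).card = m + 2 := by
      rw [Finset.card_erase_of_mem hv]; omega
    rcases h with ⟨a, ha, b, hb, hab, hva, hvb, hL'⟩ |
      ⟨a, ha, b, hb, c, hc, hab, hac, hbc, hva, hvb, hvc, hL'⟩
    · obtain ⟨p, hG, hR⟩ := ih _ E hE hL' hcard
      exact stepI k l hkl U E v a b hv ha hb hab hva hvb p hG hR
    · obtain ⟨p, hG, hR⟩ := ih _ (insert s(a, b) E) (by
        intro x hx
        rcases Finset.mem_insert.mp hx with hx | hx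
        · rw [Sym2.eq_iff] at hx
          rcases hx with ⟨h1, h2⟩ | ⟨h1, h2⟩
          · exact hab (h1.symm.trans h2)
          · exact hab (h2.symm.trans h1)
        · exact hE x hx) hL' hcard
      exact stepII k l hkl U E v a b c hv ha hb hc hab hac hbc hva hvb hvc p hG hR

end Bear

namespace Bear
variable {n d : ℕ}

lemma proj_mulVec (y x : Fin d → ℝ) :
    proj y *ᵥ x = x - ((y ⬝ᵥ y)⁻¹ * (y ⬝ᵥ x)) • y := by
  unfold proj
  rw [Matrix.sub_mulVec, Matrix.one_mulVec, Matrix.smul_mulVec, Matrix.vecMulVec_mulVec]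
  funext k
  simp
  ring

lemma proj_neg (y : Fin d → ℝ) : proj (-y) = proj y := by
  unfold proj
  simp [Matrix.vecMulVec_neg, Matrix.neg_vecMulVec]

lemma proj_quad (y x : Fin d → ℝ) (hy : y ≠ 0) :
    x ⬝ᵥ (proj y *ᵥ x) = (proj y *ᵥ x) ⬝ᵥ (proj y *ᵥ x) := by
  have h : y ⬝ᵥ y ≠ 0 := fun h => hy (dotProduct_self_eq_zero.mp h)
  rw [proj_mulVec]
  simp only [dotProduct_sub, sub_dotProduct, dotProduct_smul, smul_dotProduct, smul_eq_mul,
    dotProduct_comm x y]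
  field_simp
  ring

lemma proj_quad_nonneg (y x : Fin d → ℝ) (hy : y ≠ 0) : 0 ≤ x ⬝ᵥ (proj y *ᵥ x) := by
  rw [proj_quad y x hy]
  exact Finset.sum_nonneg (fun i _ => mul_self_nonneg _)

lemma proj_quad_zero (y x : Fin d → ℝ) (hy : y ≠ 0) (h : x ⬝ᵥ (proj y *ᵥ x) = 0) :
    ∃ c : ℝ, x = c • y := by
  rw [proj_quad y x hy, dotProduct_self_eq_zero, proj_mulVec] at h
  exact ⟨_, sub_eq_zero.mp h⟩

lemma proj_smul (y : Fin d → ℝ) (c : ℝ) (hy : y ≠ 0) : proj y *ᵥ (c • y) = 0 := by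
  have h : y ⬝ᵥ y ≠ 0 := fun h => hy (dotProduct_self_eq_zero.mp h)
  rw [proj_mulVec, dotProduct_smul, smul_eq_mul, mul_comm c, inv_mul_cancel_left₀ h, sub_self]

open scoped Classical in
lemma lap_mulVec (G : SimpleGraph (Fin n)) (p : Fin n → Fin d → ℝ) (u : Fin n × Fin d → ℝ)
    (i : Fin n) (k : Fin d) :
    (bearingLaplacian G p *ᵥ u) (i, k) =
      ∑ j, if G.Adj i j then
        (proj (p j - p i) *ᵥ (fun l => u (i, l) - u (j, l))) k else 0 := by
  have hL : ∀ j l, bearingLaplacian G p (i, k) (j, l) =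
      (if i = j then ∑ m, (if G.Adj i m then proj (p m - p i) k l else 0) else 0) -
      (if G.Adj i j then proj (p j - p i) k l else 0) := by
    intro j l
    unfold bearingLaplacian
    by_cases hij : i = j
    · subst hij
      simp [Matrix.sum_apply, Finset.sum_filter]
    · by_cases ha : G.Adj i j <;> simp [hij, ha]
  simp only [Matrix.mulVec, dotProduct]
  rw [Fintype.sum_prod_type]
  simp only [hL, sub_mul, Finset.sum_sub_distrib, mul_sub, ite_mul, zero_mul]
  have e1 : ∑ j, ∑ l, (if i = j then
      (∑ m, (if G.Adj i m then proj (p m - p i) k l else 0)) * u (j, l) else 0) =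
      ∑ m, if G.Adj i m then ∑ l, proj (p m - p i) k l * u (i, l) else 0 := by
    rw [Finset.sum_eq_single i]
    · simp only [if_true, Finset.sum_mul, ite_mul, zero_mul]
      rw [Finset.sum_comm]
      refine Finset.sum_congr rfl (fun m _ => ?_)
      split_ifs <;> simp
    · intro j _ hj
      simp [hj.symm]
    · simp
  rw [e1, ← Finset.sum_sub_distrib]
  refine Finset.sum_congr rfl (fun j _ => ?_)
  split_ifs <;> simp

lemma lap_ker (G : SimpleGraph (Fin n)) (p : Fin n → Fin d → ℝ) (hp : Function.Injective p)
    (u : Fin n × Fin d → ℝ) (hu : bearingLaplacian G p *ᵥ u = 0) (i j : Fin n)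
    (hij : G.Adj i j) : ∃ c : ℝ, (fun l => u (i, l) - u (j, l)) = c • (p j - p i) := by
  classical
  let D : Fin n → Fin n → Fin d → ℝ := fun i j l => u (i, l) - u (j, l)
  let F : Fin n → Fin n → ℝ := fun i j =>
    if G.Adj i j then (D i j) ⬝ᵥ (proj (p j - p i) *ᵥ D i j) else 0
  let A : Fin n → Fin n → ℝ := fun i j =>
    if G.Adj i j then (fun l => u (i, l)) ⬝ᵥ (proj (p j - p i) *ᵥ D i j) else 0
  have hne : ∀ i j, G.Adj i j → p j - p i ≠ 0 := fun i j h =>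
    sub_ne_zero.mpr (fun h' => h.ne (hp h').symm)
  have hA : ∑ i, ∑ j, A i j = 0 := by
    refine Finset.sum_eq_zero (fun i _ => ?_)
    have : ∑ j, A i j = ∑ k, u (i, k) * (bearingLaplacian G p *ᵥ u) (i, k) := by
      simp only [lap_mulVec, Finset.mul_sum]
      rw [Finset.sum_comm]
      refine Finset.sum_congr rfl (fun j _ => ?_)
      simp only [A, D]
      split_ifs <;> simp [dotProduct]
    rw [this, hu]
    simp
  have hF : ∀ i j, F i j = A i j + A j i := by
    intro i j
    simp only [F, A, G.adj_comm j i]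
    split_ifs with h
    · have h1 : proj (p i - p j) = proj (p j - p i) := by rw [← proj_neg, neg_sub]
      have h2 : D j i = - D i j := by funext l; simp [D]
      rw [h1, h2, Matrix.mulVec_neg, dotProduct_neg, ← sub_eq_add_neg, ← sub_dotProduct]
      rfl
    · simp
  have hFs : ∑ i, ∑ j, F i j = 0 := by
    simp only [hF, Finset.sum_add_distrib]
    rw [Finset.sum_comm (f := fun i j => A j i), hA]; simp
  have hF0 : ∀ i j, 0 ≤ F i j := by
    intro i j
    simp only [F]
    split_ifs with h
    · exact proj_quad_nonneg _ _ (hne i j h)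
    · exact le_refl _
  have h1 := (Finset.sum_eq_zero_iff_of_nonneg
    (fun i _ => Finset.sum_nonneg (fun j _ => hF0 i j))).mp hFs i (Finset.mem_univ _)
  have h2 := (Finset.sum_eq_zero_iff_of_nonneg (fun j _ => hF0 i j)).mp h1 j (Finset.mem_univ _)
  simp only [F, if_pos hij] at h2
  exact proj_quad_zero _ _ (hne i j hij) h2

/-- trivial motions -/
def triv (p : Fin n → Fin d → ℝ) : (ℝ × (Fin d → ℝ)) →ₗ[ℝ] (Fin n × Fin d → ℝ) where
  toFun x := fun q => x.1 * p q.1 q.2 + x.2 q.2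
  map_add' x y := by funext q; simp; ring
  map_smul' c x := by funext q; simp; ring

lemma rank_eq (G : SimpleGraph (Fin n)) (E : Finset (Sym2 (Fin n)))
    (hE : ∀ i j, s(i, j) ∈ E → G.Adj i j) (p : Fin n → Fin d → ℝ) (hp : Function.Injective p)
    (hR : Rig Finset.univ E p) (hn : 2 ≤ n) :
    (bearingLaplacian G p).rank = d * n - d - 1 := by
  classical
  have hker : LinearMap.ker (bearingLaplacian G p).mulVecLin = LinearMap.range (triv p) := by
    ext u
    rw [LinearMap.mem_ker, LinearMap.mem_range, Matrix.mulVecLin_apply]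
    constructor
    · intro hu
      obtain ⟨c, w, hcw⟩ := hR (fun i l => u (i, l)) (by
        intro i _ j _ hij k l
        obtain ⟨c, hc⟩ := lap_ker G p hp u hu i j (hE i j hij)
        have h1 := congrFun hc k
        have h2 := congrFun hc l
        simp only [Pi.smul_apply, Pi.sub_apply, smul_eq_mul] at h1 h2 ⊢
        rw [h1, h2]; ring)
      refine ⟨(c, w), ?_⟩
      funext ⟨i, k⟩
      have := congrFun (hcw i (Finset.mem_univ _)) k
      simp only [Pi.add_apply, Pi.smul_apply, smul_eq_mul] at this
      rw [this]; rfl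
    · rintro ⟨⟨c, w⟩, rfl⟩
      funext ⟨i, k⟩
      rw [lap_mulVec]
      refine Finset.sum_eq_zero (fun j _ => ?_)
      split_ifs with h
      · have : (fun l => triv p (c, w) (i, l) - triv p (c, w) (j, l)) = (-c) • (p j - p i) := by
          funext l
          simp only [triv, LinearMap.coe_mk, AddHom.coe_mk, Pi.smul_apply, Pi.sub_apply,
            smul_eq_mul]
          ring
        rw [this, proj_smul _ _ (sub_ne_zero.mpr (fun h' => h.ne (hp h').symm))]
        rfl
      · rfl
  have hinj : Function.Injective (triv p) := by
    rw [← LinearMap.ker_eq_bot, LinearMap.ker_eq_bot']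
    rintro ⟨c, w⟩ h
    have h0 : ∀ i k, c * p i k + w k = 0 := fun i k => congrFun h (i, k)
    have hc : c = 0 := by
      by_contra hc
      have : p ⟨0, by omega⟩ = p ⟨1, by omega⟩ := by
        funext k
        have h1 := h0 ⟨0, by omega⟩ k
        have h2 := h0 ⟨1, by omega⟩ k
        exact mul_left_cancel₀ hc (by linarith)
      have := hp this
      simp at this
    subst hc
    have hw : w = 0 := by
      funext k
      simpa using h0 ⟨0, by omega⟩ k
    rw [hw]; rfl
  have h1 := LinearMap.finrank_range_add_finrank_ker (bearingLaplacian G p).mulVecLin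
  rw [hker, LinearMap.finrank_range_of_inj hinj] at h1
  simp only [Module.finrank_prod, Module.finrank_self, Module.finrank_fintype_fun_eq_card,
    Fintype.card_prod, Fintype.card_fin] at h1
  rw [Nat.mul_comm d n]
  unfold Matrix.rank
  omega

end Bear

theorem stmt17 {n : ℕ} (G : SimpleGraph (Fin n))
    (h : ∃ H : SimpleGraph (Fin n), H ≤ G ∧ IsLaman H)
    (d : ℕ) (hd : 2 ≤ d) :
    ∃ p : Fin n → Fin d → ℝ, Function.Injective p ∧
      (bearingLaplacian G p).rank = d * n - d - 1 := by
  classical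
  rcases Nat.lt_or_ge n 2 with hn | hn
  · have hsub : Subsingleton (Fin n) := by
      rw [← Fintype.card_le_one_iff_subsingleton, Fintype.card_fin]; omega
    refine ⟨0, Function.injective_of_subsingleton _, ?_⟩
    have h0 : bearingLaplacian G (0 : Fin n → Fin d → ℝ) = 0 := by
      funext q r
      unfold bearingLaplacian
      rw [if_pos (Subsingleton.elim _ _), Finset.filter_false_of_mem]
      · simp
      · intro k _ hk
        exact hk.ne (Subsingleton.elim _ _)
    rw [h0, Matrix.rank_zero]
    have : d * n ≤ d * 1 := Nat.mul_le_mul_left d (by omega)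
    omega
  · obtain ⟨H, hHG, hc, hs⟩ := h
    have hE : ∀ v, s(v, v) ∉ H.edgeFinset := by
      intro v hv
      simp at hv
    have hcnt : ∀ S : Finset (Fin n), 2 ≤ S.card → Bear.cnt H.edgeFinset S + 3 ≤ 2 * S.card := by
      intro S hS
      have h1 := hs S hS
      have h2 : Bear.cnt H.edgeFinset S ≤ 2 * S.card - 3 := by
        unfold Bear.cnt
        convert h1
      omega
    have hall : Bear.cnt H.edgeFinset Finset.univ = H.edgeFinset.card := by
      unfold Bear.cnt
      rw [Finset.filter_true_of_mem]
      intro e _ v _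
      exact Finset.mem_univ v
    have hL : Bear.Lam Finset.univ H.edgeFinset := by
      refine ⟨?_, fun S _ => hcnt S⟩
      have hc' : H.edgeFinset.card = 2 * n - 3 := by convert hc
      rw [hall, hc', Finset.card_univ, Fintype.card_fin]
      omega
    obtain ⟨p, hG, hR⟩ := Bear.main (d := d) ⟨0, by omega⟩ ⟨1, by omega⟩ (by simp) (n - 2)
      Finset.univ H.edgeFinset hE hL (by rw [Finset.card_univ, Fintype.card_fin]; omega)
    have hp : Function.Injective p := by
      intro a b hab
      by_contra hne
      exact hG.1 a (Finset.mem_univ _) b (Finset.mem_univ _) hne (congrFun hab _)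
    refine ⟨p, hp, Bear.rank_eq G H.edgeFinset ?_ p hp hR hn⟩
    intro i j hij
    rw [SimpleGraph.mem_edgeFinset, SimpleGraph.mem_edgeSet] at hij
    exact hHG hij
end

section
/- A graph G on n vertices is generically bearing rigid in R^2 if and only if G contains a Laman spanning subgraph. In particular, a generically bearing rigid graph in R^2 has at least 2n - 3 edges. -/
open Matrix

namespace LamanAux

open Finset

/-- (2,3)-sparse loopless edge sets. -/
def Sparse {n : ℕ} (E : Finset (Sym2 (Fin n))) : Prop :=
  (∀ e ∈ E, ¬ e.IsDiag) ∧
  ∀ X : Finset (Fin n), 2 ≤ X.card → (E ∩ X.sym2).card + 3 ≤ 2 * X.card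

lemma Sparse.mono {n : ℕ} {E F : Finset (Sym2 (Fin n))} (h : Sparse E) (hF : F ⊆ E) :
    Sparse F :=
  ⟨fun e he => h.1 e (hF he), fun X hX =>
    le_trans (Nat.add_le_add_right (card_le_card (inter_subset_inter_right hF)) 3) (h.2 X hX)⟩

/-- the neighbours of `v`. -/
def nbr {n : ℕ} (E : Finset (Sym2 (Fin n))) (v : Fin n) : Finset (Fin n) :=
  univ.filter (fun j => s(v, j) ∈ E)

/-- the edges incident to `v`. -/
def inc {n : ℕ} (E : Finset (Sym2 (Fin n))) (v : Fin n) : Finset (Sym2 (Fin n)) :=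
  E.filter (fun e => v ∈ e)

/-- the edges avoiding `v`. -/
def del {n : ℕ} (E : Finset (Sym2 (Fin n))) (v : Fin n) : Finset (Sym2 (Fin n)) :=
  E.filter (fun e => v ∉ e)

lemma card_nbr {n : ℕ} (E : Finset (Sym2 (Fin n))) (v : Fin n) :
    (nbr E v).card = (inc E v).card := by
  apply card_bij (fun j _ => s(v, j))
  · intro a ha
    simp_all [nbr, inc]
  · intro a _ b _ h
    exact Sym2.congr_right.1 h
  · intro e he
    simp only [inc, mem_filter] at he
    obtain ⟨j, rfl⟩ := he.2
    exact ⟨j, by simp [nbr, he.1], rfl⟩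

lemma card_inc_add_del {n : ℕ} (E : Finset (Sym2 (Fin n))) (v : Fin n) :
    (inc E v).card + (del E v).card = E.card :=
  card_filter_add_card_filter_not _

lemma exists_low {n : ℕ} {E : Finset (Sym2 (Fin n))} (h : Sparse E) (hE : E.Nonempty) :
    ∃ v, 1 ≤ (nbr E v).card ∧ (nbr E v).card ≤ 3 := by
  by_contra! hcon
  set X : Finset (Fin n) := univ.filter (fun v => 1 ≤ (nbr E v).card) with hX
  have hmem : ∀ e ∈ E, ∀ v ∈ e, v ∈ X := by
    intro e he v hv
    simp only [hX, mem_filter, mem_univ, true_and, card_nbr]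
    exact card_pos.2 ⟨e, by simp [inc, he, hv]⟩
  have hsub : E ∩ X.sym2 = E := by
    rw [inter_eq_left]
    intro e he
    rw [mem_sym2_iff]
    exact hmem e he
  have hX2 : 2 ≤ X.card := by
    obtain ⟨e, he⟩ := hE
    rw [← Sym2.card_toFinset_of_not_isDiag e (h.1 e he)]
    apply card_le_card
    intro v hv
    exact hmem e he v (by simpa using hv)
  have h1 := h.2 X hX2
  rw [hsub] at h1
  have h2 := sum_card_bipartiteAbove_eq_sum_card_bipartiteBelow
    (s := X) (t := E) (fun v e => v ∈ e)
  have h3 : ∀ e ∈ E, (X.bipartiteBelow (fun v e => v ∈ e) e).card = 2 := by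
    intro e he
    rw [← Sym2.card_toFinset_of_not_isDiag e (h.1 e he)]
    congr 1
    ext v
    simp only [bipartiteBelow, mem_filter, Sym2.mem_toFinset]
    exact ⟨fun h => h.2, fun h => ⟨hmem e he v h, h⟩⟩
  rw [sum_congr rfl h3, sum_const, smul_eq_mul] at h2
  have h4 : ∀ v ∈ X, 4 ≤ (E.bipartiteAbove (fun v e => v ∈ e) v).card := by
    intro v hv
    have := hcon v (by simpa [hX] using hv)
    rw [card_nbr] at this
    exact this
  have h5 := card_nsmul_le_sum X _ 4 h4
  rw [smul_eq_mul] at h5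
  omega

lemma card_inter_super {n : ℕ} (E : Finset (Sym2 (Fin n))) (X Y : Finset (Fin n)) :
    (E ∩ X.sym2).card + (E ∩ Y.sym2).card ≤
      (E ∩ (X ∪ Y).sym2).card + (E ∩ (X ∩ Y).sym2).card := by
  rw [← card_union_add_card_inter]
  apply Nat.add_le_add <;> apply card_le_card <;> intro e <;>
    simp only [mem_union, mem_inter, mem_sym2_iff] <;> grind

lemma inter_sym2_eq_empty {n : ℕ} {E : Finset (Sym2 (Fin n))} (hE : ∀ e ∈ E, ¬ e.IsDiag)
    {X : Finset (Fin n)} (hX : X.card ≤ 1) : E ∩ X.sym2 = ∅ := by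
  rw [eq_empty_iff_forall_notMem]
  intro e he
  rw [mem_inter, mem_sym2_iff] at he
  have h1 := Sym2.card_toFinset_of_not_isDiag e (hE e he.1)
  have h2 : e.toFinset ⊆ X := fun v hv => he.2 v (by simpa using hv)
  have := card_le_card h2
  omega

lemma card_three {n : ℕ} {E : Finset (Sym2 (Fin n))} (hE : ∀ e ∈ E, ¬ e.IsDiag)
    {X Y Z : Finset (Fin n)} (h1 : (X ∩ Y).card ≤ 1) (h2 : (X ∩ Z).card ≤ 1)
    (h3 : (Y ∩ Z).card ≤ 1) :
    (E ∩ X.sym2).card + (E ∩ Y.sym2).card + (E ∩ Z.sym2).card ≤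
      (E ∩ (X ∪ Y ∪ Z).sym2).card := by
  have key : ∀ {A B : Finset (Fin n)}, (A ∩ B).card ≤ 1 →
      Disjoint (E ∩ A.sym2) (E ∩ B.sym2) := by
    intro A B h
    rw [disjoint_iff_inter_eq_empty, ← inter_sym2_eq_empty hE h]
    ext e
    simp only [mem_inter, mem_sym2_iff]
    grind
  rw [← card_union_of_disjoint (key h1), ← card_union_of_disjoint]
  · apply card_le_card
    intro e
    simp only [mem_union, mem_inter, mem_sym2_iff]
    grind
  · rw [disjoint_union_left]
    exact ⟨key h2, key h3⟩

lemma exists_tight {n : ℕ} {E : Finset (Sym2 (Fin n))} (h : Sparse E) {v a b : Fin n}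
    (hva : v ≠ a) (hvb : v ≠ b) (hab : a ≠ b)
    (hbad : ¬ (s(a, b) ∉ del E v ∧ Sparse (insert s(a, b) (del E v)))) :
    ∃ X : Finset (Fin n), a ∈ X ∧ b ∈ X ∧ v ∉ X ∧
      2 * X.card ≤ (del E v ∩ X.sym2).card + 3 := by
  by_cases hm : s(a, b) ∈ del E v
  · refine ⟨{a, b}, by simp, by simp, by simp [hva, hvb], ?_⟩
    have : 1 ≤ (del E v ∩ ({a, b} : Finset (Fin n)).sym2).card :=
      card_pos.2 ⟨s(a, b), by simp [hm]⟩
    have := card_pair hab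
    omega
  · have h1 : ¬ Sparse (insert s(a, b) (del E v)) := fun hh => hbad ⟨hm, hh⟩
    have hdel : Sparse (del E v) := h.mono (filter_subset _ _)
    unfold Sparse at h1
    rw [not_and] at h1
    have h2 := h1 (by
      intro e he
      rcases mem_insert.1 he with rfl | he
      · simpa using hab
      · exact hdel.1 e he)
    push Not at h2
    obtain ⟨X, hX2, hX⟩ := h2
    have hle := hdel.2 X hX2
    have hin : s(a, b) ∈ X.sym2 := by
      by_contra hcon
      rw [insert_inter_of_notMem hcon] at hX
      omega
    have ha : a ∈ X := by simp at hin; exact hin.1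
    have hb : b ∈ X := by simp at hin; exact hin.2
    rw [insert_inter_of_mem hin] at hX
    have h3 := card_insert_le s(a, b) (del E v ∩ X.sym2)
    refine ⟨X.erase v, by simp [ha, hva.symm], by simp [hb, hvb.symm], by simp, ?_⟩
    have h4 : del E v ∩ (X.erase v).sym2 = del E v ∩ X.sym2 := by
      ext e
      simp only [mem_inter, mem_sym2_iff, del, mem_filter, mem_erase]
      grind
    rw [h4]
    have := card_erase_le (a := v) (s := X)
    omega

lemma no_tight_triple {n : ℕ} {E : Finset (Sym2 (Fin n))} (h : Sparse E) {v a b c : Fin n}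
    (hab : a ≠ b) (hac : a ≠ c) (hbc : b ≠ c)
    (ha : s(v, a) ∈ E) (hb : s(v, b) ∈ E) (hc : s(v, c) ∈ E)
    {U : Finset (Fin n)} (haU : a ∈ U) (hbU : b ∈ U) (hcU : c ∈ U) (hv : v ∉ U) :
    (del E v ∩ U.sym2).card + 4 ≤ 2 * U.card := by
  have h1 : (del E v ∩ U.sym2) ∪ {s(v, a), s(v, b), s(v, c)} ⊆ E ∩ (insert v U).sym2 := by
    intro e he
    simp only [mem_union, mem_inter, mem_sym2_iff, del, mem_filter, mem_insert,
      mem_singleton] at he ⊢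
    rcases he with he | rfl | rfl | rfl
    · exact ⟨he.1.1, fun w hw => Or.inr (he.2 w hw)⟩
    all_goals simp_all
  have h2 := card_le_card h1
  rw [card_union_of_disjoint] at h2
  · have h3 : ({s(v, a), s(v, b), s(v, c)} : Finset (Sym2 (Fin n))).card = 3 := by
      rw [card_eq_three]
      exact ⟨_, _, _, by rwa [Ne, Sym2.congr_right], by rwa [Ne, Sym2.congr_right],
        by rwa [Ne, Sym2.congr_right], rfl⟩
    have h4 := card_insert_of_notMem hv
    have h5 : 1 ≤ U.card := card_pos.2 ⟨a, haU⟩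
    have := h.2 (insert v U) (by omega)
    omega
  · rw [disjoint_left]
    intro e he he'
    simp only [mem_inter, del, mem_filter] at he
    simp only [mem_insert, mem_singleton] at he'
    rcases he' with rfl | rfl | rfl <;> simp at he

lemma exists_good {n : ℕ} {E : Finset (Sym2 (Fin n))} (h : Sparse E) {v a b c : Fin n}
    (hab : a ≠ b) (hac : a ≠ c) (hbc : b ≠ c)
    (ha : s(v, a) ∈ E) (hb : s(v, b) ∈ E) (hc : s(v, c) ∈ E) :
    (s(a, b) ∉ del E v ∧ Sparse (insert s(a, b) (del E v))) ∨
    (s(a, c) ∉ del E v ∧ Sparse (insert s(a, c) (del E v))) ∨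
    (s(b, c) ∉ del E v ∧ Sparse (insert s(b, c) (del E v))) := by
  by_contra hcon
  rw [not_or, not_or] at hcon
  obtain ⟨g1, g2, g3⟩ := hcon
  have hva : v ≠ a := by simpa using h.1 _ ha
  have hvb : v ≠ b := by simpa using h.1 _ hb
  have hvc : v ≠ c := by simpa using h.1 _ hc
  have hd : Sparse (del E v) := h.mono (filter_subset _ _)
  obtain ⟨X, hX1, hX2, hX3, hX⟩ := exists_tight h hva hvb hab g1
  obtain ⟨Y, hY1, hY2, hY3, hY⟩ := exists_tight h hva hvc hac g2
  obtain ⟨Z, hZ1, hZ2, hZ3, hZ⟩ := exists_tight h hvb hvc hbc g3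
  have key : ∀ A B : Finset (Fin n), a ∈ A ∪ B → b ∈ A ∪ B → c ∈ A ∪ B → v ∉ A → v ∉ B →
      2 * A.card ≤ (del E v ∩ A.sym2).card + 3 → 2 * B.card ≤ (del E v ∩ B.sym2).card + 3 →
      (A ∩ B).card ≤ 1 := by
    intro A B k1 k2 k3 k4 k5 hA hB
    by_contra hlt
    have e1 := hd.2 (A ∩ B) (by omega)
    have e2 := card_inter_super (del E v) A B
    have e3 := no_tight_triple h hab hac hbc ha hb hc k1 k2 k3 (by simp [k4, k5])
    have e4 := card_union_add_card_inter A B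
    omega
  have i1 := key X Y (by simp [*]) (by simp [*]) (by simp [*]) hX3 hY3 hX hY
  have i2 := key X Z (by simp [*]) (by simp [*]) (by simp [*]) hX3 hZ3 hX hZ
  have i3 := key Y Z (by simp [*]) (by simp [*]) (by simp [*]) hY3 hZ3 hY hZ
  have t := card_three hd.1 i1 i2 i3
  have e3 := no_tight_triple h hab hac hbc ha hb hc (U := X ∪ Y ∪ Z)
    (by simp [*]) (by simp [*]) (by simp [*]) (by simp [*])
  have e4 := card_union_add_card_inter X Y
  have e5 := card_union_add_card_inter (X ∪ Y) Z
  have e6 : 1 ≤ (X ∩ Y).card := card_pos.2 ⟨a, by simp [*]⟩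
  have e7 : 2 ≤ ((X ∪ Y) ∩ Z).card := by
    rw [← card_pair hbc]
    apply card_le_card
    intro x hx
    simp only [mem_insert, mem_singleton] at hx
    rcases hx with rfl | rfl <;> simp [*]
  omega

end LamanAux

namespace LamanAux

open Finset

/-- rotation by a right angle -/
def perp (x : Fin 2 → ℝ) : Fin 2 → ℝ := ![-x 1, x 0]

lemma perp_sub_comm (x y : Fin 2 → ℝ) (s : Fin 2) : perp (x - y) s = - perp (y - x) s := by
  fin_cases s <;> simp [perp]

lemma perp_self (x : Fin 2 → ℝ) (s : Fin 2) : perp (x - x) s = 0 := by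
  fin_cases s <;> simp [perp]

/-- rigidity matrix rows -/
def row {n : ℕ} (p : Fin n → Fin 2 → ℝ) (e : Sym2 (Fin n)) : Fin n × Fin 2 → ℝ := fun q =>
  Sym2.lift ⟨fun i j => ((if q.1 = i then 1 else 0) - (if q.1 = j then 1 else 0)) *
    perp (p i - p j) q.2, fun i j => by
      beta_reduce; rw [perp_sub_comm]; ring⟩ e

lemma row_mk {n : ℕ} (p : Fin n → Fin 2 → ℝ) (i j : Fin n) (q : Fin n × Fin 2) :
    row p s(i, j) q = ((if q.1 = i then 1 else 0) - (if q.1 = j then 1 else 0)) *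
      perp (p i - p j) q.2 := rfl

lemma row_left {n : ℕ} (p : Fin n → Fin 2 → ℝ) (i j : Fin n) (s : Fin 2) :
    row p s(i, j) (i, s) = perp (p i - p j) s := by
  rw [row_mk]
  by_cases h : i = j
  · subst h; rw [perp_self, mul_zero]
  · simp [h]

lemma row_notMem {n : ℕ} (p : Fin n → Fin 2 → ℝ) (e : Sym2 (Fin n)) (k : Fin n) (s : Fin 2)
    (h : k ∉ e) : row p e (k, s) = 0 := by
  induction e with
  | _ i j =>
    simp only [Sym2.mem_iff, not_or] at h
    simp [row_mk, h.1, h.2]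

lemma sum_row {n : ℕ} (p : Fin n → Fin 2 → ℝ) (f : Sym2 (Fin n) → ℝ) (k : Fin n) (s : Fin 2) :
    ∑ e, f e * row p e (k, s) = ∑ j, f s(k, j) * perp (p k - p j) s := by
  have h1 : ∑ e, f e * row p e (k, s) =
      ∑ e ∈ univ.image (fun j => s(k, j)), f e * row p e (k, s) := by
    symm
    apply sum_subset (subset_univ _)
    intro e _ he
    rw [row_notMem, mul_zero]
    rintro ⟨j, rfl⟩
    exact he (mem_image_of_mem _ (mem_univ j))
  rw [h1, sum_image]
  · simp [row_left]
  · intro a _ b _ h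
    exact Sym2.congr_right.1 h

/-- squared edge length -/
def len {n : ℕ} (p : Fin n → Fin 2 → ℝ) (e : Sym2 (Fin n)) : ℝ :=
  Sym2.lift ⟨fun i j => (p i - p j) ⬝ᵥ (p i - p j), fun i j => by
    beta_reduce; rw [← neg_sub (p j) (p i), neg_dotProduct_neg]⟩ e

lemma len_mk {n : ℕ} (p : Fin n → Fin 2 → ℝ) (i j : Fin n) :
    len p s(i, j) = (p i - p j) ⬝ᵥ (p i - p j) := rfl

lemma len_nonneg {n : ℕ} (p : Fin n → Fin 2 → ℝ) (e : Sym2 (Fin n)) : 0 ≤ len p e := by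
  induction e with
  | _ i j =>
    rw [len_mk, dotProduct]
    exact sum_nonneg fun _ _ => mul_self_nonneg _

lemma len_pos {n : ℕ} {p : Fin n → Fin 2 → ℝ} (hp : Function.Injective p) (e : Sym2 (Fin n))
    (he : ¬ e.IsDiag) : 0 < len p e := by
  refine lt_of_le_of_ne (len_nonneg p e) (Ne.symm ?_)
  induction e with
  | _ i j =>
    rw [len_mk, Ne, dotProduct_self_eq_zero, sub_eq_zero]
    intro h
    exact he (by simpa using hp h)

lemma proj_eq (x : Fin 2 → ℝ) (hx : x ≠ 0) (s t : Fin 2) :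
    proj x s t = (x ⬝ᵥ x)⁻¹ * (perp x s * perp x t) := by
  have h : x ⬝ᵥ x ≠ 0 := by rwa [Ne, dotProduct_self_eq_zero]
  rw [dotProduct, Fin.sum_univ_two] at h
  have e : proj x s t = (1 : Matrix (Fin 2) (Fin 2) ℝ) s t - (x ⬝ᵥ x)⁻¹ * (x s * x t) := rfl
  rw [e, dotProduct, Fin.sum_univ_two, eq_comm, inv_mul_eq_iff_eq_mul₀ h, mul_sub,
    mul_inv_cancel_left₀ h]
  fin_cases s <;> fin_cases t <;> simp [perp] <;> ring

open scoped Classical in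
lemma rank_lap {n : ℕ} (G : SimpleGraph (Fin n)) (p : Fin n → Fin 2 → ℝ)
    (hp : Function.Injective p) :
    (bearingLaplacian G p).rank =
      Module.finrank ℝ (Submodule.span ℝ (row p '' (G.edgeFinset : Set (Sym2 (Fin n))))) := by
  let M : Matrix (Sym2 (Fin n)) (Fin n × Fin 2) ℝ := Matrix.of fun e q =>
    if e ∈ G.edgeFinset then (√(len p e))⁻¹ * row p e q else 0
  have hMd : ∀ e q, M e q = if e ∈ G.edgeFinset then (√(len p e))⁻¹ * row p e q else 0 :=
    fun _ _ => rfl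
  clear_value M
  have hM : bearingLaplacian G p = Mᵀ * M := by
    ext ⟨k, s⟩ ⟨l, t⟩
    have h1 : (Mᵀ * M) (k, s) (l, t) = ∑ e, (if e ∈ G.edgeFinset then
        (len p e)⁻¹ * row p e (l, t) else 0) * row p e (k, s) := by
      rw [mul_apply]
      apply sum_congr rfl
      intro e _
      simp only [transpose_apply, hMd]
      split_ifs with he
      · have := Real.mul_self_sqrt (len_nonneg p e)
        have h2 : (len p e)⁻¹ = (√(len p e))⁻¹ * (√(len p e))⁻¹ := by rw [← mul_inv, this]
        rw [h2]
        ring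
      · ring
    rw [h1, sum_row]
    simp only [bearingLaplacian]
    by_cases hkl : k = l
    · subst hkl
      rw [if_pos rfl, Matrix.sum_apply, sum_filter]
      apply sum_congr rfl
      intro j _
      by_cases hj : G.Adj k j
      · have hne : p j - p k ≠ 0 := by
          rw [sub_ne_zero]; exact fun h => hj.ne (hp h).symm
        rw [if_pos hj, if_pos (by simpa using hj), row_left, proj_eq _ hne, Sym2.eq_swap,
          len_mk, perp_sub_comm (p j), perp_sub_comm (p j)]
        ring
      · rw [if_neg hj, if_neg (by simpa using hj), zero_mul]
    · rw [if_neg hkl, sum_eq_single l]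
      · by_cases hj : G.Adj k l
        · have hne : p l - p k ≠ 0 := by
            rw [sub_ne_zero]; exact fun h => hj.ne (hp h).symm
          rw [if_pos hj, if_pos (by simpa using hj), proj_eq _ hne, Sym2.eq_swap, row_left,
            len_mk, perp_sub_comm (p k)]
          ring
        · rw [if_neg hj, if_neg (by simpa using hj), zero_mul]
      · intro j _ hj
        rw [row_notMem, mul_zero, ite_self, zero_mul]
        simp [Ne.symm hkl, Ne.symm hj]
      · simp
  rw [hM, rank_transpose_mul_self, rank_eq_finrank_span_row]
  suffices hsp : Submodule.span ℝ (Set.range M.row) =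
      Submodule.span ℝ (row p '' (G.edgeFinset : Set (Sym2 (Fin n)))) by rw [hsp]
  apply le_antisymm
  · rw [Submodule.span_le]
    rintro _ ⟨e, rfl⟩
    by_cases he : e ∈ G.edgeFinset
    · have : M.row e = (√(len p e))⁻¹ • row p e := by
        ext q; simp only [Matrix.row, hMd, if_pos he]; rfl
      rw [this]
      exact Submodule.smul_mem _ _ (Submodule.subset_span ⟨e, he, rfl⟩)
    · have : M.row e = 0 := by
        ext q; simp only [Matrix.row, hMd, if_neg he]; rfl
      rw [this]
      exact Submodule.zero_mem _
  · rw [Submodule.span_le]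
    rintro _ ⟨e, he, rfl⟩
    have he' : e ∈ G.edgeFinset := he
    have hpos : 0 < √(len p e) := Real.sqrt_pos.2 (len_pos hp e
      (G.not_isDiag_of_mem_edgeFinset he'))
    have : row p e = √(len p e) • M.row e := by
      ext q
      simp only [Matrix.row, hMd, if_pos he', Pi.smul_apply, smul_eq_mul]
      field_simp
    rw [this]
    exact Submodule.smul_mem _ _ (Submodule.subset_span ⟨e, rfl⟩)

lemma row_orth_const {n : ℕ} (p : Fin n → Fin 2 → ℝ) (e : Sym2 (Fin n)) (s : Fin 2) :
    ∑ k, row p e (k, s) = 0 := by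
  induction e with
  | _ i j =>
    simp only [row_mk]
    rw [← sum_mul, sum_sub_distrib]
    simp

lemma row_orth_p {n : ℕ} (p : Fin n → Fin 2 → ℝ) (e : Sym2 (Fin n)) :
    ∑ k, (row p e (k, 0) * p k 0 + row p e (k, 1) * p k 1) = 0 := by
  induction e with
  | _ i j =>
    simp only [row_mk, sub_mul, ite_mul, one_mul, zero_mul]
    simp only [sum_add_distrib, sum_sub_distrib, sum_ite_eq', mem_univ, if_true, perp]
    simp
    ring

lemma card_le_of_indep {n : ℕ} (p : Fin n → Fin 2 → ℝ) (hp : Function.Injective p)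
    (E : Finset (Sym2 (Fin n))) (hE : LinearIndepOn ℝ (row p) (E : Set (Sym2 (Fin n))))
    (S : Finset (Fin n)) (hS : 2 ≤ S.card) (hES : E ⊆ S.sym2) :
    E.card + 3 ≤ 2 * S.card := by
  obtain ⟨a, ha, b, hb, hab⟩ := one_lt_card.1 hS
  obtain ⟨s, hs⟩ : ∃ s, p a s ≠ p b s := by
    by_contra! h
    exact hab (hp (funext h))
  let D : Finset (Fin n × Fin 2) := {(a, 0), (a, 1), (b, s)}
  have hD : D.card = 3 := by
    rw [card_eq_three]
    exact ⟨_, _, _, by simp, by simp [hab], by simp [hab], rfl⟩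
  let T : Finset (Fin n × Fin 2) := (S ×ˢ univ) \ D
  have hT : T.card + 3 = 2 * S.card := by
    have hsub : D ⊆ S ×ˢ univ := by
      intro q hq
      simp only [D, mem_insert, mem_singleton] at hq
      rcases hq with rfl | rfl | rfl <;> simp [ha, hb]
    have h1 := card_sdiff_add_card_eq_card hsub
    rw [card_product, hD] at h1
    simp at h1
    change T.card + 3 = _ at h1
    omega
  let R : (Fin n × Fin 2 → ℝ) →ₗ[ℝ] (T → ℝ) := LinearMap.funLeft ℝ ℝ (Subtype.val)
  let W : Submodule ℝ (Fin n × Fin 2 → ℝ) :=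
    { carrier := {x | (∀ q, q.1 ∉ S → x q = 0) ∧ (∀ s, ∑ k, x (k, s) = 0) ∧
        ∑ k, (x (k, 0) * p k 0 + x (k, 1) * p k 1) = 0}
      zero_mem' := by simp
      add_mem' := by
        rintro x y ⟨h1, h2, h3⟩ ⟨g1, g2, g3⟩
        refine ⟨fun q hq => by simp [h1 q hq, g1 q hq], fun s => ?_, ?_⟩
        · simp [sum_add_distrib, h2, g2]
        · refine Eq.trans ?_ ((congrArg₂ (· + ·) h3 g3).trans (add_zero 0))
          rw [← sum_add_distrib]
          apply sum_congr rfl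
          intro k _
          simp only [Pi.add_apply]
          ring
      smul_mem' := by
        rintro c x ⟨h1, h2, h3⟩
        refine ⟨fun q hq => by simp [h1 q hq], fun s => ?_, ?_⟩
        · simp [← mul_sum, h2]
        · rw [← mul_zero c, ← h3, mul_sum]
          apply sum_congr rfl
          intro k _
          simp only [Pi.smul_apply, smul_eq_mul]
          ring }
  have hW : Submodule.span ℝ (Set.range (fun e : E => row p e)) ≤ W := by
    rw [Submodule.span_le]
    rintro _ ⟨⟨e, he⟩, rfl⟩
    refine ⟨fun q hq => row_notMem p e q.1 q.2 (fun hh => hq ?_), row_orth_const p e,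
      row_orth_p p e⟩
    exact mem_sym2_iff.1 (hES he) _ hh
  have hker : ∀ x ∈ W, R x = 0 → x = 0 := by
    rintro x ⟨h1, h2, h3⟩ hR
    have hz : ∀ q, q ∉ D → x q = 0 := by
      intro q hq
      by_cases hqS : q.1 ∈ S
      · have hqT : q ∈ T := by simp [T, hq, hqS]
        exact congrFun hR ⟨q, hqT⟩
      · exact h1 q hqS
    have hz' : ∀ k, k ≠ a → k ≠ b → ∀ s, x (k, s) = 0 := by
      intro k hk1 hk2 s
      apply hz
      simp [D, hk1, hk2]
    have two : ∀ f : Fin n → ℝ, (∀ k, k ≠ a → k ≠ b → f k = 0) → ∑ k, f k = f a + f b := by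
      intro f hf
      rw [← sum_pair hab]
      symm
      apply sum_subset (subset_univ _)
      intro k _ hk
      simp only [mem_insert, mem_singleton, not_or] at hk
      exact hf k hk.1 hk.2
    rw [two _ (fun k k1 k2 => by simp [hz' k k1 k2])] at h3
    have h20 := h2 0
    have h21 := h2 1
    rw [two _ (fun k k1 k2 => hz' k k1 k2 _)] at h20 h21
    have : x (a, 0) = 0 ∧ x (a, 1) = 0 ∧ x (b, 0) = 0 ∧ x (b, 1) = 0 := by
      fin_cases s
      · have hb1 : x (b, 1) = 0 := hz _ (by simp [D, hab.symm])
        simp only [Fin.zero_eta] at hs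
        have ha1 : x (a, 1) = 0 := by linarith
        have hb0 : x (b, 0) = - x (a, 0) := by linarith
        have : x (a, 0) * (p a 0 - p b 0) = 0 := by
          rw [ha1, hb0, hb1] at h3; linarith
        have ha0 : x (a, 0) = 0 := by
          rcases mul_eq_zero.1 this with h | h
          · exact h
          · exact absurd (sub_eq_zero.1 h) hs
        exact ⟨ha0, ha1, by linarith, hb1⟩
      · have hb1 : x (b, 0) = 0 := hz _ (by simp [D, hab.symm])
        simp only [Fin.mk_one] at hs
        have ha1 : x (a, 0) = 0 := by linarith
        have hb0 : x (b, 1) = - x (a, 1) := by linarith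
        have : x (a, 1) * (p a 1 - p b 1) = 0 := by
          rw [ha1, hb0, hb1] at h3; linarith
        have ha0 : x (a, 1) = 0 := by
          rcases mul_eq_zero.1 this with h | h
          · exact h
          · exact absurd (sub_eq_zero.1 h) hs
        exact ⟨ha1, ha0, hb1, by linarith⟩
    obtain ⟨t1, t2, t3, t4⟩ := this
    ext ⟨k, t⟩
    by_cases hka : k = a
    · subst hka; fin_cases t <;> assumption
    by_cases hkb : k = b
    · subst hkb; fin_cases t <;> assumption
    exact hz' k hka hkb t
  have hind : LinearIndependent ℝ (R ∘ (fun e : E => row p e)) := by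
    apply LinearIndependent.map hE
    rw [Submodule.disjoint_def]
    intro x hx hxR
    exact hker x (hW hx) (by simpa using hxR)
  have := hind.fintype_card_le_finrank
  rw [Module.finrank_fintype_fun_eq_card, Fintype.card_coe, Fintype.card_coe] at this
  omega

end LamanAux

namespace LamanAux

open Finset Filter Topology

lemma stress_iff {n : ℕ} (p : Fin n → Fin 2 → ℝ) (c : Sym2 (Fin n) → ℝ) :
    (∀ k s, ∑ j, c s(k, j) * (p k s - p j s) = 0) ↔ ∑ e, c e • row p e = 0 := by
  have h : ∀ k s, (∑ e, c e • row p e) (k, s) = ∑ j, c s(k, j) * perp (p k - p j) s := by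
    intro k s
    rw [← sum_row, Finset.sum_apply]
    rfl
  constructor
  · intro hs
    ext ⟨k, s⟩
    rw [h]
    fin_cases s
    · have := hs k 1
      simp only [perp, Fin.zero_eta, Matrix.cons_val_zero, Pi.sub_apply, mul_neg,
        sum_neg_distrib, this, neg_zero, Pi.zero_apply]
    · have := hs k 0
      simpa [perp] using this
  · intro hs k s
    have h0 := h k 0
    have h1 := h k 1
    rw [hs] at h0 h1
    fin_cases s
    · simpa [perp] using h1.symm
    · simpa only [perp, Fin.mk_one, Matrix.cons_val_zero, Pi.sub_apply, mul_neg,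
        sum_neg_distrib, Pi.zero_apply, eq_comm, neg_eq_zero, zero_eq_neg] using h0.symm

lemma indep_iff {n : ℕ} (p : Fin n → Fin 2 → ℝ) (E : Finset (Sym2 (Fin n))) :
    LinearIndepOn ℝ (row p) (E : Set (Sym2 (Fin n))) ↔
      ∀ c : Sym2 (Fin n) → ℝ, (∀ e, e ∉ E → c e = 0) →
        (∀ k s, ∑ j, c s(k, j) * (p k s - p j s) = 0) → ∀ e, c e = 0 := by
  rw [linearIndepOn_finset_iff]
  constructor
  · intro h c hc hs e
    by_cases he : e ∈ E
    · refine h c ?_ e he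
      rw [stress_iff] at hs
      rw [← hs]
      apply sum_subset (subset_univ _)
      intro e _ he
      rw [hc e he, zero_smul]
    · exact hc e he
  · intro h c hs e he
    have := h (fun e => if e ∈ E then c e else 0) (fun e he => if_neg he) ?_ e
    · simpa [he] using this
    · refine (stress_iff p (fun e => if e ∈ E then c e else 0)).2 ?_
      rw [← hs]
      simp [ite_smul, sum_ite_mem]

/-- signed area of a triangle -/
def det3 (x y z : Fin 2 → ℝ) : ℝ := (y 0 - x 0) * (z 1 - x 1) - (y 1 - x 1) * (z 0 - x 0)

/-- general position -/
def Generic {n : ℕ} (p : Fin n → Fin 2 → ℝ) : Prop :=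
  Function.Injective p ∧ ∀ a b c, a ≠ b → a ≠ c → b ≠ c → det3 (p a) (p b) (p c) ≠ 0

lemma quad_ne (A B C : ℝ) (h : C ≠ 0) : ∀ᶠ t in 𝓝[≠] (0 : ℝ), A + B * t + C * t ^ 2 ≠ 0 := by
  apply nhdsNE_le_cofinite
  let P : Polynomial ℝ := Polynomial.C A + Polynomial.C B * Polynomial.X +
    Polynomial.C C * Polynomial.X ^ 2
  have hP : P ≠ 0 := by
    intro h0
    have := congrArg (fun Q => Polynomial.coeff Q 2) h0
    simp [P] at this
    exact h this
  have hf := Polynomial.finite_setOfPred_isRoot hP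
  refine Filter.eventually_cofinite.2 ?_
  refine hf.subset ?_
  intro t ht
  simp only [ne_eq, not_not, Set.mem_setOf_eq] at ht
  simp [Polynomial.IsRoot, P, ht]

lemma row_continuous {n : ℕ} (e : Sym2 (Fin n)) :
    Continuous (fun p : Fin n → Fin 2 → ℝ => row p e) := by
  induction e with
  | _ i j =>
    apply continuous_pi
    rintro ⟨k, s⟩
    simp only [row_mk]
    apply Continuous.mul continuous_const
    fin_cases s
    · simp only [perp, Fin.zero_eta, Matrix.cons_val_zero, Pi.sub_apply]
      fun_prop
    · simp only [perp, Fin.mk_one, Matrix.cons_val_one, Matrix.cons_val_fin_one, Pi.sub_apply]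
      fun_prop

lemma perturb {n : ℕ} (p : Fin n → Fin 2 → ℝ) (E : Finset (Sym2 (Fin n)))
    (h : LinearIndepOn ℝ (row p) (E : Set (Sym2 (Fin n)))) :
    ∃ pp, Generic pp ∧ LinearIndepOn ℝ (row pp) (E : Set (Sym2 (Fin n))) := by
  let q : Fin n → Fin 2 → ℝ := fun i => ![(i : ℕ), ((i : ℕ) : ℝ) ^ 2]
  have hq : ∀ a b : Fin n, a ≠ b → ((a : ℕ) : ℝ) - ((b : ℕ) : ℝ) ≠ 0 := by
    intro a b hab h
    apply hab
    rw [sub_eq_zero] at h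
    exact Fin.ext (by exact_mod_cast h)
  let f : ℝ → Fin n → Fin 2 → ℝ := fun t => p + t • q
  have hf : Continuous f := by fun_prop
  have hf0 : f 0 = p := by simp [f]
  have e1 : ∀ᶠ t in 𝓝[≠] (0 : ℝ), LinearIndepOn ℝ (row (f t)) (E : Set (Sym2 (Fin n))) := by
    apply Filter.Eventually.filter_mono nhdsWithin_le_nhds
    have ho := isOpen_setOfPred_linearIndependent (𝕜 := ℝ) (E := Fin n × Fin 2 → ℝ)
      (ι := (E : Set (Sym2 (Fin n))))
    have hc : Continuous (fun t : ℝ => fun e : (E : Set (Sym2 (Fin n))) => row (f t) e.1) :=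
      continuous_pi fun e => (row_continuous e.1).comp hf
    refine (ho.preimage hc).mem_nhds ?_
    change LinearIndependent ℝ (fun e : (E : Set (Sym2 (Fin n))) => row (f 0) e.1)
    rw [hf0]
    exact h
  have e2 : ∀ᶠ t in 𝓝[≠] (0 : ℝ), ∀ a b : Fin n, a ≠ b → f t a 1 ≠ f t b 1 ∨ f t a ≠ f t b := by
    rw [eventually_all]; intro a
    rw [eventually_all]; intro b
    rw [eventually_imp_distrib_left]; intro hab
    by_cases hs : ((a : ℕ) : ℝ) ^ 2 - ((b : ℕ) : ℝ) ^ 2 = 0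
    · exfalso
      rw [sq_sub_sq, mul_eq_zero] at hs
      rcases hs with hs | hs
      · apply hab
        have h1 : (a : ℕ) + (b : ℕ) = 0 := by exact_mod_cast hs
        exact Fin.ext (by omega)
      · exact hq a b hab hs
    · have := quad_ne 0 (p a 1 - p b 1) _ hs
      filter_upwards [this] with t ht
      left
      intro hh
      apply ht
      have hh' : p a 1 + t * ((a : ℕ) : ℝ) ^ 2 = p b 1 + t * ((b : ℕ) : ℝ) ^ 2 := by
        simpa [f, q] using hh
      linear_combination t * hh'
  have e3 : ∀ᶠ t in 𝓝[≠] (0 : ℝ), ∀ a b c : Fin n, a ≠ b → a ≠ c → b ≠ c →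
      det3 (f t a) (f t b) (f t c) ≠ 0 := by
    rw [eventually_all]; intro a
    rw [eventually_all]; intro b
    rw [eventually_all]; intro c
    rw [eventually_imp_distrib_left]; intro hab
    rw [eventually_imp_distrib_left]; intro hac
    rw [eventually_imp_distrib_left]; intro hbc
    have hC : det3 (q a) (q b) (q c) ≠ 0 := by
      have : det3 (q a) (q b) (q c) =
          (((b : ℕ) : ℝ) - (a : ℕ)) * (((c : ℕ) : ℝ) - (a : ℕ)) * (((c : ℕ) : ℝ) - (b : ℕ)) := by
        simp [det3, q]; ring
      rw [this]
      exact mul_ne_zero (mul_ne_zero (hq _ _ hab.symm) (hq _ _ hac.symm)) (hq _ _ hbc.symm)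
    have := quad_ne (det3 (p a) (p b) (p c))
      ((p b 0 - p a 0) * (q c 1 - q a 1) + (q b 0 - q a 0) * (p c 1 - p a 1)
        - (p b 1 - p a 1) * (q c 0 - q a 0) - (q b 1 - q a 1) * (p c 0 - p a 0)) _ hC
    filter_upwards [this] with t ht
    intro hh
    apply ht
    rw [← hh]
    simp only [det3, f, Pi.add_apply, Pi.smul_apply, smul_eq_mul]
    ring
  obtain ⟨t, h1, h2, h3⟩ := (e1.and (e2.and e3)).exists
  refine ⟨f t, ⟨?_, h3⟩, h1⟩
  intro a b hab
  by_contra hne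
  rcases h2 a b hne with h | h
  · exact h (by rw [hab])
  · exact h hab

/-- vertices of low degree may be removed when their edges carry no stress -/
lemma indep_of_del {n : ℕ} {p : Fin n → Fin 2 → ℝ} {E : Finset (Sym2 (Fin n))} {v : Fin n}
    (h : LinearIndepOn ℝ (row p) (del E v : Set (Sym2 (Fin n))))
    (hv : ∀ c : Sym2 (Fin n) → ℝ, (∀ e, e ∉ E → c e = 0) →
      (∀ s, ∑ j, c s(v, j) * (p v s - p j s) = 0) → ∀ j, c s(v, j) = 0) :
    LinearIndepOn ℝ (row p) (E : Set (Sym2 (Fin n))) := by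
  rw [indep_iff] at h ⊢
  intro c hc hs
  apply h c _ hs
  intro e he
  by_cases hve : v ∈ e
  · obtain ⟨j, rfl⟩ := hve
    exact hv c hc (hs v) j
  · apply hc
    intro hE
    exact he (by simp [del, hE, hve])

lemma sum_nbr {n : ℕ} {E : Finset (Sym2 (Fin n))} (v : Fin n) (c : Sym2 (Fin n) → ℝ)
    (hc : ∀ e, e ∉ E → c e = 0) (f : Fin n → ℝ) :
    ∑ j, c s(v, j) * f j = ∑ j ∈ nbr E v, c s(v, j) * f j := by
  symm
  apply sum_subset (subset_univ _)
  intro j _ hj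
  rw [hc _ (by simpa [nbr] using hj), zero_mul]

lemma two_zero {x y z : Fin 2 → ℝ} (h : det3 z x y ≠ 0) {α β : ℝ}
    (hs : ∀ s, α * (z s - x s) + β * (z s - y s) = 0) : α = 0 ∧ β = 0 := by
  have h0 := hs 0
  have h1 := hs 1
  constructor
  · have : α * det3 z x y = 0 := by
      simp only [det3]; linear_combination (y 0 - z 0) * h1 - (y 1 - z 1) * h0
    exact (mul_eq_zero.1 this).resolve_right h
  · have : β * det3 z x y = 0 := by
      simp only [det3]; linear_combination (x 1 - z 1) * h0 - (x 0 - z 0) * h1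
    exact (mul_eq_zero.1 this).resolve_right h

lemma one_ext {n : ℕ} {p : Fin n → Fin 2 → ℝ} {E : Finset (Sym2 (Fin n))} {v a b c : Fin n}
    (hp : Generic p) (hva : v ≠ a) (hvb : v ≠ b) (hvc : v ≠ c)
    (hab : a ≠ b) (hac : a ≠ c) (hbc : b ≠ c) (hN : nbr E v = {a, b, c})
    (hnot : s(a, b) ∉ del E v)
    (h : LinearIndepOn ℝ (row p) ((insert s(a, b) (del E v) : Finset _) : Set (Sym2 (Fin n)))) :
    ∃ pp, LinearIndepOn ℝ (row pp) (E : Set (Sym2 (Fin n))) := by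
  set pp : Fin n → Fin 2 → ℝ := Function.update p v (fun s => (p a s + p b s) / 2) with hpp
  have pv : ∀ s, pp v s = (p a s + p b s) / 2 := by intro s; simp [hpp]
  have pk : ∀ k, k ≠ v → pp k = p k := by intro k hk; simp [hpp, hk]
  refine ⟨pp, ?_⟩
  rw [indep_iff] at h ⊢
  intro w hw hs
  have habE : s(a, b) ∉ E := by
    intro hE; apply hnot; simp [del, hE, hva, hvb]
  have hv1 : ∀ s, w s(v, a) * (pp v s - pp a s) + (w s(v, b) * (pp v s - pp b s) +
      w s(v, c) * (pp v s - pp c s)) = 0 := by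
    intro s
    have := hs v s
    rw [sum_nbr v w hw (fun j => pp v s - pp j s), hN] at this
    rwa [sum_insert (by simp [hab, hac]), sum_insert (by simp [hbc]), sum_singleton] at this
  have hdet := hp.2 a b c hab hac hbc
  have hres : w s(v, a) = w s(v, b) ∧ w s(v, c) = 0 := by
    have h0 := hv1 0
    have h1 := hv1 1
    rw [pv, pk a hva.symm, pk b hvb.symm, pk c hvc.symm] at h0 h1
    have hcz : w s(v, c) = 0 := by
      have : w s(v, c) * det3 (p a) (p b) (p c) = 0 := by
        simp only [det3]
        linear_combination (p b 1 - p a 1) * h0 - (p b 0 - p a 0) * h1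
      exact (mul_eq_zero.1 this).resolve_right hdet
    refine ⟨?_, hcz⟩
    rw [hcz] at h0 h1
    have : (w s(v, a) - w s(v, b)) * det3 (p a) (p b) (p c) = 0 := by
      simp only [det3]
      linear_combination 2 * (p c 1 - p a 1) * h0 - 2 * (p c 0 - p a 0) * h1
    exact sub_eq_zero.1 ((mul_eq_zero.1 this).resolve_right hdet)
  obtain ⟨hwab, hwc⟩ := hres
  have hother : ∀ k, k ≠ a → k ≠ b → w s(v, k) = 0 := by
    intro k ka kb
    by_cases kc : k = c
    · rw [kc, hwc]
    · apply hw
      intro hE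
      have : k ∈ nbr E v := by simp [nbr, hE]
      rw [hN] at this
      simp [ka, kb, kc] at this
  set ww : Sym2 (Fin n) → ℝ := fun e => if e = s(a, b) then w s(v, a) / 2 else
    if v ∈ e then 0 else w e with hww
  have wwv : ∀ j, ww s(v, j) = 0 := by
    intro j
    have : s(v, j) ≠ s(a, b) := by
      intro hh
      have : v ∈ s(a, b) := hh ▸ Sym2.mem_mk_left v j
      simp [hva, hvb] at this
    simp [hww, this]
  have wwab : ww s(a, b) = w s(v, a) / 2 := by simp [hww]
  have wwk : ∀ e, e ≠ s(a, b) → v ∉ e → ww e = w e := by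
    intro e h1 h2; simp [hww, h1, h2]
  have main : ∀ e, ww e = 0 := by
    apply h
    · intro e he
      simp only [mem_insert, not_or] at he
      by_cases hve : v ∈ e
      · obtain ⟨j, rfl⟩ := hve
        exact wwv j
      · rw [wwk e he.1 hve]
        apply hw
        intro hE
        exact he.2 (by simp [del, hE, hve])
    · intro k s
      by_cases hk : k = v
      · subst hk
        simp [wwv]
      have ends : ∀ aa bb, aa ≠ bb → v ≠ aa → v ≠ bb → s(aa, bb) = s(a, b) →
          w s(v, aa) = w s(v, a) → pp v s = (p aa s + p bb s) / 2 →
          ∑ j, ww s(aa, j) * (p aa s - p j s) = 0 := by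
        intro aa bb habq hvaq hvbq he hwe hpe
        have key : ∀ j, ww s(aa, j) * (p aa s - p j s) = w s(aa, j) * (pp aa s - pp j s) +
            (if j = bb then w s(v, a) / 2 * (p aa s - p bb s) else 0) -
            (if j = v then w s(v, a) / 2 * (p aa s - p bb s) else 0) := by
          intro j
          by_cases hjb : j = bb
          · subst hjb
            rw [he, wwab, hw _ habE, if_pos rfl, if_neg hvbq.symm]
            ring
          by_cases hjv : j = v
          · subst hjv
            rw [Sym2.eq_swap, wwv, if_neg hjb, if_pos rfl, hwe, pk aa hvaq.symm, hpe]
            ring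
          · rw [if_neg hjb, if_neg hjv, wwk, pk _ hjv, pk _ hvaq.symm]
            · ring
            · rw [← he, Ne, Sym2.congr_right]; exact hjb
            · simp [hvaq, Ne.symm hjv]
        rw [sum_congr rfl (fun j _ => key j), sum_sub_distrib, sum_add_distrib, hs aa s]
        simp
      by_cases hka : k = a
      · subst hka
        exact ends _ b hab hva hvb rfl rfl (pv s)
      by_cases hkb : k = b
      · subst hkb
        exact ends _ a hab.symm hvb hva Sym2.eq_swap hwab.symm (by rw [pv]; ring)
      rw [← hs k s]
      apply sum_congr rfl
      intro j _
      by_cases hjv : j = v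
      · subst hjv
        rw [Sym2.eq_swap, wwv, hother k hka hkb]
        ring
      · rw [wwk, pk _ hjv, pk _ hk]
        · intro hh
          have : k ∈ s(a, b) := hh ▸ Sym2.mem_mk_left k j
          simp [hka, hkb] at this
        · simp [Ne.symm hk, Ne.symm hjv]
  have wva : w s(v, a) = 0 := by
    have := main s(a, b)
    rw [wwab] at this
    linarith
  intro e
  by_cases hve : v ∈ e
  · obtain ⟨j, rfl⟩ := hve
    by_cases ja : j = a
    · rw [ja, wva]
    by_cases jb : j = b
    · rw [jb, ← hwab, wva]
    exact hother j ja jb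
  · by_cases he : e = s(a, b)
    · rw [he, hw _ habE]
    · rw [← wwk e he hve, main]

theorem sparse_indep {n : ℕ} : ∀ (m : ℕ) (E : Finset (Sym2 (Fin n))), E.card = m → Sparse E →
    ∃ p, Generic p ∧ LinearIndepOn ℝ (row p) (E : Set (Sym2 (Fin n))) := by
  intro m
  induction m using Nat.strong_induction_on with
  | _ m ih =>
  intro E hm hE
  rcases E.eq_empty_or_nonempty with rfl | hne
  · exact perturb 0 ∅ (by simp)
  obtain ⟨v, hv1, hv3⟩ := exists_low hE hne
  have hcard := card_inc_add_del E v
  rw [← card_nbr] at hcard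
  have hdel : Sparse (del E v) := hE.mono (filter_subset _ _)
  have hvn : ∀ j ∈ nbr E v, s(v, j) ∈ E := by intro j hj; simpa [nbr] using hj
  have hvne : ∀ j ∈ nbr E v, v ≠ j := by
    intro j hj; simpa using hE.1 _ (hvn j hj)
  have hout : ∀ c : Sym2 (Fin n) → ℝ, (∀ e, e ∉ E → c e = 0) → ∀ j, j ∉ nbr E v →
      c s(v, j) = 0 := by
    intro c hc j hj
    exact hc _ (by simpa [nbr] using hj)
  obtain h1 | h2 | h3 : (nbr E v).card = 1 ∨ (nbr E v).card = 2 ∨ (nbr E v).card = 3 := by omega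
  · obtain ⟨a, ha⟩ := card_eq_one.1 h1
    obtain ⟨p, hp, hi⟩ := ih _ (by omega) (del E v) rfl hdel
    refine ⟨p, hp, indep_of_del hi ?_⟩
    intro c hc hs j
    by_cases hj : j ∈ nbr E v
    · have hne := hvne j hj
      have hja : j = a := by simpa [ha] using hj
      subst hja
      by_contra hcne
      apply hne
      apply hp.1
      funext s
      have := hs s
      rw [sum_nbr v c hc (fun j => p v s - p j s), ha, sum_singleton] at this
      exact sub_eq_zero.1 ((mul_eq_zero.1 this).resolve_left hcne)
    · exact hout c hc j hj
  · obtain ⟨a, b, hab, hN⟩ := card_eq_two.1 h2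
    obtain ⟨p, hp, hi⟩ := ih _ (by omega) (del E v) rfl hdel
    have hva := hvne a (by simp [hN])
    have hvb := hvne b (by simp [hN])
    refine ⟨p, hp, indep_of_del hi ?_⟩
    intro c hc hs j
    have hz := two_zero (hp.2 v a b hva hvb hab) (α := c s(v, a)) (β := c s(v, b)) (by
      intro s
      have := hs s
      rwa [sum_nbr v c hc (fun j => p v s - p j s), hN, sum_pair hab] at this)
    by_cases hj : j ∈ nbr E v
    · rw [hN, mem_insert, mem_singleton] at hj
      rcases hj with rfl | rfl
      · exact hz.1
      · exact hz.2
    · exact hout c hc j hj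
  · obtain ⟨a, b, c, hab, hac, hbc, hN⟩ := card_eq_three.1 h3
    have ma : a ∈ nbr E v := by simp [hN]
    have mb : b ∈ nbr E v := by simp [hN]
    have mc : c ∈ nbr E v := by simp [hN]
    have step : ∀ a b c : Fin n, a ∈ nbr E v → b ∈ nbr E v → c ∈ nbr E v → a ≠ b → a ≠ c →
        b ≠ c → nbr E v = {a, b, c} →
        (s(a, b) ∉ del E v ∧ Sparse (insert s(a, b) (del E v))) →
        ∃ p, Generic p ∧ LinearIndepOn ℝ (row p) (E : Set (Sym2 (Fin n))) := by
      intro a b c ma mb mc hab hac hbc hN hg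
      have hci := card_insert_of_notMem hg.1
      obtain ⟨p, hp, hi⟩ := ih _ (by omega) _ rfl hg.2
      obtain ⟨pp, hpp⟩ := one_ext hp (hvne a ma) (hvne b mb) (hvne c mc) hab hac hbc hN hg.1 hi
      exact perturb pp E hpp
    rcases exists_good hE hab hac hbc (hvn a ma) (hvn b mb) (hvn c mc) with hg | hg | hg
    · exact step a b c ma mb mc hab hac hbc hN hg
    · exact step a c b ma mc mb hac hab hbc.symm (by rw [hN]; ext; simp; tauto) hg
    · exact step b c a mb mc ma hbc hab.symm hac.symm (by rw [hN]; ext; simp; tauto) hg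

open scoped Classical in
lemma laman_of_rank {n : ℕ} (hn : 2 ≤ n) (G : SimpleGraph (Fin n)) (p : Fin n → Fin 2 → ℝ)
    (hp : Function.Injective p) (hr : (bearingLaplacian G p).rank = 2 * n - 3) :
    ∃ H : SimpleGraph (Fin n), H ≤ G ∧ IsLaman H := by
  rw [rank_lap G p hp] at hr
  obtain ⟨B, hBE, -, hspan, hB⟩ := exists_linearIndepOn_extension (K := ℝ) (v := row p)
    (s := ∅) (t := (G.edgeFinset : Set (Sym2 (Fin n)))) (by simp) (by simp)
  obtain ⟨F, rfl⟩ : ∃ F : Finset (Sym2 (Fin n)), (F : Set _) = B :=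
    ⟨B.toFinset, by simp⟩
  have hFE : F ⊆ G.edgeFinset := by exact_mod_cast hBE
  have hcard : F.card = 2 * n - 3 := by
    rw [← hr]
    have h1 : Submodule.span ℝ (row p '' (G.edgeFinset : Set (Sym2 (Fin n)))) =
        Submodule.span ℝ (Set.range (fun e : (F : Set (Sym2 (Fin n))) => row p e)) := by
      apply le_antisymm
      · rw [Submodule.span_le]
        rw [Set.image_eq_range (row p) (F : Set (Sym2 (Fin n)))] at hspan
        exact hspan
      · apply Submodule.span_mono
        rintro _ ⟨e, rfl⟩
        exact ⟨e, hBE e.2, rfl⟩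
    rw [h1, finrank_span_eq_card hB]
    simp
  obtain ⟨H, hH'⟩ : ∃ H : SimpleGraph (Fin n), H.edgeSet = F := by
    refine ⟨SimpleGraph.fromEdgeSet (F : Set (Sym2 (Fin n))), ?_⟩
    ext e
    rw [SimpleGraph.edgeSet_fromEdgeSet]
    constructor
    · intro h; exact h.1
    · intro h; exact ⟨h, G.not_isDiag_of_mem_edgeFinset (hFE h)⟩
  have hH : H.edgeFinset = F := by
    ext e
    rw [SimpleGraph.mem_edgeFinset, hH', mem_coe]
  refine ⟨H, ?_, ?_, ?_⟩
  · rw [← SimpleGraph.edgeFinset_subset_edgeFinset, hH]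
    exact hFE
  · rw [hH, hcard]
  · intro S hS
    rw [hH]
    have := card_le_of_indep p hp (F.filter (fun e => ∀ v ∈ e, v ∈ S))
      (hB.mono (by exact_mod_cast filter_subset _ _)) S hS (by
        intro e he
        rw [mem_filter] at he
        exact mem_sym2_iff.2 he.2)
    omega

open scoped Classical in
lemma rank_of_laman {n : ℕ} (hn : 2 ≤ n) (G H : SimpleGraph (Fin n)) (hHG : H ≤ G)
    (hH : IsLaman H) : ∃ p : Fin n → Fin 2 → ℝ, Function.Injective p ∧
      (bearingLaplacian G p).rank = 2 * n - 3 := by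
  have hsp : Sparse H.edgeFinset := by
    refine ⟨fun e he => H.not_isDiag_of_mem_edgeFinset he, fun X hX => ?_⟩
    have h1 := hH.2 X hX
    have h2 : H.edgeFinset ∩ X.sym2 = H.edgeFinset.filter (fun e => ∀ v ∈ e, v ∈ X) := by
      ext e
      rw [mem_inter, mem_filter, mem_sym2_iff]
    rw [h2]
    omega
  obtain ⟨p, hp, hi⟩ := sparse_indep _ _ rfl hsp
  refine ⟨p, hp.1, ?_⟩
  rw [rank_lap G p hp.1]
  have hsub : (H.edgeFinset : Set (Sym2 (Fin n))) ⊆ G.edgeFinset := by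
    exact_mod_cast SimpleGraph.edgeFinset_subset_edgeFinset.2 hHG
  obtain ⟨B, hBE, hHB, hspan, hB⟩ := exists_linearIndepOn_extension (K := ℝ) (v := row p)
    hi hsub
  obtain ⟨F, rfl⟩ : ∃ F : Finset (Sym2 (Fin n)), (F : Set _) = B :=
    ⟨B.toFinset, by simp⟩
  have h1 : Submodule.span ℝ (row p '' (G.edgeFinset : Set (Sym2 (Fin n)))) =
      Submodule.span ℝ (Set.range (fun e : (F : Set (Sym2 (Fin n))) => row p e)) := by
    apply le_antisymm
    · rw [Submodule.span_le]
      rw [Set.image_eq_range (row p) (F : Set (Sym2 (Fin n)))] at hspan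
      exact hspan
    · apply Submodule.span_mono
      rintro _ ⟨e, rfl⟩
      exact ⟨e, hBE e.2, rfl⟩
  rw [h1, finrank_span_eq_card hB]
  have h2 := card_le_of_indep p hp.1 F hB univ (by simpa using hn) (by simp)
  have h3 : H.edgeFinset.card ≤ F.card := card_le_card (by exact_mod_cast hHB)
  have h4 := hH.1
  simp only [card_univ, Fintype.card_fin] at h2
  have h5 : Fintype.card (F : Set (Sym2 (Fin n))) = F.card := by simp
  rw [h5]
  omega

end LamanAux

open scoped Classical in
theorem stmt19 {n : ℕ} (hn : 2 ≤ n) (G : SimpleGraph (Fin n)) :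
    ((∃ p : Fin n → Fin 2 → ℝ, Function.Injective p ∧
        (bearingLaplacian G p).rank = 2 * n - 3) ↔
      ∃ H : SimpleGraph (Fin n), H ≤ G ∧ IsLaman H) ∧
    ((∃ p : Fin n → Fin 2 → ℝ, Function.Injective p ∧
        (bearingLaplacian G p).rank = 2 * n - 3) →
      2 * n - 3 ≤ G.edgeFinset.card) := by
  refine ⟨⟨?_, ?_⟩, ?_⟩
  · rintro ⟨p, hp, hr⟩
    exact LamanAux.laman_of_rank hn G p hp hr
  · rintro ⟨H, hHG, hH⟩
    exact LamanAux.rank_of_laman hn G H hHG hH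
  · rintro ⟨p, hp, hr⟩
    obtain ⟨H, hHG, hH⟩ := LamanAux.laman_of_rank hn G p hp hr
    rw [← hH.1]
    exact Finset.card_le_card (SimpleGraph.edgeFinset_subset_edgeFinset.2 hHG)
end
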